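/- Fix an integer d ≥ 2 and δ ∈ (0,1). Let a^{jk} : ℝ → ℝ (1 ≤ j,k ≤ d) be smooth functions of x¹ only, with a^{jk} = a^{kj} and δ|θ|² ≤ Σ_{j,k=1}^d a^{jk}(x¹) θ^j θ^k ≤ δ⁻¹|θ|² for all x¹ and θ ∈ ℝ^d. Set L₀v = v_t + Σ_{j,k} a^{jk}(x¹) v_{x^j x^k}. Let u : ℝ^{d+1} → ℝ be smooth with compact support, and let h be smooth on an open neighborhood of the closure of Q_4 with L₀h = 0 in Q_4 and h = u on the parabolic boundary ∂'Q_4 = ([0,16] × ∂B_4) ∪ ({16} × B_4). Then sup_{Q_1} |h_{tt}| + Σ_{j=1}^d sup_{Q_1} |h_{t x^j}| + Σ_{j=1}^d Σ_{k=2}^d sup_{Q_1} |h_{t x^j x^k}| + Σ_{i,j=1}^d Σ_{k=2}^d sup_{Q_1} |h_{x^i x^j x^k}| ≤ N [ (∫_{Q_4} |L₀u|² dx dt)^{1/2} + (∫_{Q_4} |u_{xx}|² dx dt)^{1/2} ], where N = N(d,δ) and |u_{xx}|² = Σ_{j,k} |u_{x^j x^k}|². -/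

import Mathlib

open MeasureTheory

/-- Partial derivative in `t`. -/
noncomputable def pdt {d : ℕ} (u : ℝ × (Fin d → ℝ) → ℝ) : ℝ × (Fin d → ℝ) → ℝ :=
  fun p => fderiv ℝ u p (1, 0)

/-- Partial derivative in `x^j`. -/
noncomputable def pdx {d : ℕ} (j : Fin d) (u : ℝ × (Fin d → ℝ) → ℝ) :
    ℝ × (Fin d → ℝ) → ℝ :=
  fun p => fderiv ℝ u p (0, Pi.single j 1)

/-- Second partial derivative in `x^j, x^k`. -/
noncomputable def pdxx {d : ℕ} (j k : Fin d) (u : ℝ × (Fin d → ℝ) → ℝ) :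
    ℝ × (Fin d → ℝ) → ℝ :=
  pdx j (pdx k u)

/-- Open Euclidean ball `B_r ⊂ ℝ^d` centered at the origin. -/
def ballE (d : ℕ) (r : ℝ) : Set (Fin d → ℝ) := {x | ∑ j, (x j) ^ 2 < r ^ 2}

/-- Euclidean sphere `∂B_r ⊂ ℝ^d` centered at the origin. -/
def sphereE (d : ℕ) (r : ℝ) : Set (Fin d → ℝ) := {x | ∑ j, (x j) ^ 2 = r ^ 2}

/-- Parabolic cylinder `Q_r = (0,r²) × B_r`. -/
def Qc (d : ℕ) (r : ℝ) : Set (ℝ × (Fin d → ℝ)) := Set.Ioo 0 (r ^ 2) ×ˢ ballE d r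

/-- Parabolic boundary `∂'Q_r = ([0,r²] × ∂B_r) ∪ ({r²} × B_r)`. -/
def pbQc (d : ℕ) (r : ℝ) : Set (ℝ × (Fin d → ℝ)) :=
  (Set.Icc 0 (r ^ 2) ×ˢ sphereE d r) ∪ (({r ^ 2} : Set ℝ) ×ˢ ballE d r)

/-!
Since the coefficients depend on `x^e` only, multiplying `L₀` by `ρ = 1 / a^{ee}` brings it into
divergence form, so that energy and Caccioppoli estimates hold for it. Moreover `L₀` commutes with
`∂_t` and with `∂_{x^k}` for `k ≠ e`: these derivatives of a solution are again solutions, and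
their remaining second derivative `v_{x^e x^e}` is recovered from the equation. Iterating the
Caccioppoli estimate bounds all the derivatives of a solution that are of order at most one in each
coordinate direction, and an anisotropic Sobolev inequality involving only such derivatives turns
the `L²` bounds into pointwise bounds, in terms of the `L²` norms of `h_t` and `h_{x^j x^k}`,
`k ≠ e`. Those are controlled by the energy estimate for `w = h - u`, which vanishes on the
parabolic boundary and solves `L₀ w = -L₀ u`.
-/

open Finset
open scoped ContDiff

section DirectionalDerivative

variable {E : Type*} [NormedAddCommGroup E] [NormedSpace ℝ E] {f g : E → ℝ} {ξ p : E}

/-- The derivative of `u` in the direction `ξ`. It treats `pdt` and all the `pdx j` at once. -/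
noncomputable def dirDeriv (ξ : E) (u : E → ℝ) : E → ℝ := fun p => fderiv ℝ u p ξ

@[fun_prop]
lemma contDiff_dirDeriv (hf : ContDiff ℝ ∞ f) : ContDiff ℝ ∞ (dirDeriv ξ f) :=
  (hf.fderiv_right le_rfl).clm_apply contDiff_const

lemma dirDeriv_comm (hf : ContDiff ℝ ∞ f) (ξ η : E) :
    dirDeriv ξ (dirDeriv η f) = dirDeriv η (dirDeriv ξ f) := by
  funext p
  have hdiff : Differentiable ℝ (fderiv ℝ f) :=
    (hf.fderiv_right (m := ∞) le_rfl).differentiable (by simp)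
  have hsymm : IsSymmSndFDerivAt ℝ f p :=
    hf.contDiffAt.isSymmSndFDerivAt (by
      rw [minSmoothness_of_isRCLikeNormedField]
      exact WithTop.coe_le_coe.2 le_top)
  unfold dirDeriv
  rw [fderiv_clm_apply (hdiff p) (by fun_prop), fderiv_clm_apply (hdiff p) (by fun_prop)]
  simpa using hsymm ξ η

lemma dirDeriv_mul (hf : Differentiable ℝ f) (hg : Differentiable ℝ g) :
    dirDeriv ξ (fun q => f q * g q) p = f p * dirDeriv ξ g p + g p * dirDeriv ξ f p := by
  simp [dirDeriv, fderiv_fun_mul (hf p) (hg p)]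

lemma dirDeriv_add (hf : Differentiable ℝ f) (hg : Differentiable ℝ g) :
    dirDeriv ξ (fun q => f q + g q) p = dirDeriv ξ f p + dirDeriv ξ g p := by
  simp [dirDeriv, fderiv_fun_add (hf p) (hg p)]

lemma dirDeriv_sub (hf : Differentiable ℝ f) (hg : Differentiable ℝ g) :
    dirDeriv ξ (fun q => f q - g q) p = dirDeriv ξ f p - dirDeriv ξ g p := by
  simp [dirDeriv, fderiv_fun_sub (hf p) (hg p)]

lemma dirDeriv_sum {ι : Type*} {s : Finset ι} {F : ι → E → ℝ}
    (hF : ∀ i, Differentiable ℝ (F i)) :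
    dirDeriv ξ (fun q => ∑ i ∈ s, F i q) p = ∑ i ∈ s, dirDeriv ξ (F i) p := by
  simp [dirDeriv, fderiv_fun_sum fun i _ => hF i p]

lemma dirDeriv_const (c : ℝ) : dirDeriv ξ (fun _ => c) p = 0 := by
  simp [dirDeriv]

lemma dirDeriv_sq (hf : Differentiable ℝ f) :
    dirDeriv ξ (fun q => f q ^ 2) p = 2 * f p * dirDeriv ξ f p := by
  simp [dirDeriv, fderiv_fun_pow 2 (hf p), mul_assoc]

lemma dirDeriv_eqOn {U : Set E} (hU : IsOpen U) (h : Set.EqOn f g U) :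
    Set.EqOn (dirDeriv ξ f) (dirDeriv ξ g) U := fun _ hq => by
  simp only [dirDeriv, (h.eventuallyEq_of_mem (hU.mem_nhds hq)).fderiv_eq]

lemma dirDeriv_slice {F : Type*} [NormedAddCommGroup F] [NormedSpace ℝ F] {G : E × F → ℝ}
    (hG : Differentiable ℝ G) (t : E) (η : F) :
    dirDeriv η (fun x => G (t, x)) = fun x => dirDeriv (0, η) G (t, x) := by
  funext x
  have hx := ((hG (t, x)).hasFDerivAt.comp x (hasFDerivAt_prodMk_right t x)).fderiv
  simp only [Function.comp_def] at hx
  simp [dirDeriv, hx]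

end DirectionalDerivative

section PartialDerivatives

/-- Space-time `ℝ^{d+1}`, with points `(t, x)`. -/
abbrev SpaceTime (d : ℕ) : Type := ℝ × (Fin d → ℝ)

variable {d : ℕ} {f g : SpaceTime d → ℝ} {p : SpaceTime d}

@[fun_prop]
lemma contDiff_pdt (hf : ContDiff ℝ ∞ f) : ContDiff ℝ ∞ (pdt f) := contDiff_dirDeriv hf

@[fun_prop]
lemma contDiff_pdx (j : Fin d) (hf : ContDiff ℝ ∞ f) : ContDiff ℝ ∞ (pdx j f) :=
  contDiff_dirDeriv hf

lemma pdx_pdt_comm (hf : ContDiff ℝ ∞ f) (j : Fin d) : pdx j (pdt f) = pdt (pdx j f) :=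
  dirDeriv_comm hf _ _

lemma pdx_comm (hf : ContDiff ℝ ∞ f) (j k : Fin d) : pdx j (pdx k f) = pdx k (pdx j f) :=
  dirDeriv_comm hf _ _

lemma pdt_mul (hf : Differentiable ℝ f) (hg : Differentiable ℝ g) :
    pdt (fun q => f q * g q) p = f p * pdt g p + g p * pdt f p := dirDeriv_mul hf hg

lemma pdx_mul (k : Fin d) (hf : Differentiable ℝ f) (hg : Differentiable ℝ g) :
    pdx k (fun q => f q * g q) p = f p * pdx k g p + g p * pdx k f p := dirDeriv_mul hf hg

lemma pdt_sq (hf : Differentiable ℝ f) :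
    pdt (fun q => f q ^ 2) p = 2 * f p * pdt f p := dirDeriv_sq hf

lemma pdx_sq (k : Fin d) (hf : Differentiable ℝ f) :
    pdx k (fun q => f q ^ 2) p = 2 * f p * pdx k f p := dirDeriv_sq hf

lemma pdx_sum {ι : Type*} {s : Finset ι} {F : ι → SpaceTime d → ℝ} (k : Fin d)
    (hF : ∀ i, Differentiable ℝ (F i)) :
    pdx k (fun q => ∑ i ∈ s, F i q) p = ∑ i ∈ s, pdx k (F i) p := dirDeriv_sum hF

lemma hasDerivAt_pdt {t : ℝ} {x : Fin d → ℝ} (hf : Differentiable ℝ f) :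
    HasDerivAt (fun s => f (s, x)) (pdt f (t, x)) t :=
  (hf _).hasFDerivAt.comp_hasDerivAt t ((hasDerivAt_id t).prodMk (hasDerivAt_const t x))

end PartialDerivatives

/-! ### Cylinders and the divergence theorem -/

section Cylinders

variable {d : ℕ}

lemma isOpen_ballE (R : ℝ) : IsOpen (ballE d R) := isOpen_lt (by fun_prop) (by fun_prop)

lemma isOpen_Qc (R : ℝ) : IsOpen (Qc d R) := isOpen_Ioo.prod (isOpen_ballE R)

lemma abs_le_of_mem_ballE {x : Fin d → ℝ} {R : ℝ} (hx : x ∈ ballE d R) (j : Fin d) :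
    |x j| ≤ |R| :=
  sq_le_sq.1 <| (single_le_sum (fun i _ => sq_nonneg (x i)) (mem_univ j)).trans hx.le

lemma ballE_subset_Icc (R : ℝ) : ballE d R ⊆ Set.Icc (fun _ => -|R|) (fun _ => |R|) :=
  fun _ hx => ⟨fun j => (abs_le.1 (abs_le_of_mem_ballE hx j)).1,
    fun j => (abs_le.1 (abs_le_of_mem_ballE hx j)).2⟩

lemma integrableOn_ballE {f : (Fin d → ℝ) → ℝ} (hf : Continuous f) (R : ℝ) :
    IntegrableOn f (ballE d R) :=
  (hf.continuousOn.integrableOn_compact isCompact_Icc).mono_set (ballE_subset_Icc R)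

lemma integrableOn_Qc {f : SpaceTime d → ℝ} (hf : Continuous f) (R : ℝ) :
    IntegrableOn f (Qc d R) :=
  (hf.continuousOn.integrableOn_compact (isCompact_Icc.prod isCompact_Icc)).mono_set
    (Set.prod_mono Set.Ioo_subset_Icc_self (ballE_subset_Icc R))

lemma Qc_mono {r R : ℝ} (hr : 0 ≤ r) (h : r ≤ R) : Qc d r ⊆ Qc d R := by
  have hsq : r ^ 2 ≤ R ^ 2 := by gcongr
  exact Set.prod_mono (Set.Ioo_subset_Ioo_right hsq) fun x hx => lt_of_lt_of_le hx hsq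

lemma setIntegral_Qc_mono {f : SpaceTime d → ℝ} {r R : ℝ} (hr : 0 ≤ r) (h : r ≤ R)
    (hf : Continuous f) (h0 : ∀ p, 0 ≤ f p) : ∫ p in Qc d r, f p ≤ ∫ p in Qc d R, f p :=
  setIntegral_mono_set (integrableOn_Qc hf R) (.of_forall h0) (.of_forall (Qc_mono hr h))

lemma insertNth_mem_ballE_iff {n : ℕ} {R s : ℝ} (j : Fin (n + 1)) (y : Fin n → ℝ) :
    (j.insertNth s y : Fin (n + 1) → ℝ) ∈ ballE (n + 1) R ↔
      s ∈ Set.Ioo (-√(R ^ 2 - ∑ i, y i ^ 2)) √(R ^ 2 - ∑ i, y i ^ 2) := by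
  rw [Set.mem_Ioo, ← abs_lt, Real.lt_sqrt (abs_nonneg _), sq_abs, lt_sub_iff_add_lt]
  simp only [ballE, Set.mem_ofPred_eq, Fin.sum_univ_succAbove _ j, Fin.insertNth_apply_same,
    Fin.insertNth_apply_succAbove]

lemma insertNth_mem_sphereE_iff {n : ℕ} {R s : ℝ} (j : Fin (n + 1)) (y : Fin n → ℝ) :
    (j.insertNth s y : Fin (n + 1) → ℝ) ∈ sphereE (n + 1) R ↔ s ^ 2 = R ^ 2 - ∑ i, y i ^ 2 := by
  rw [eq_sub_iff_add_eq]
  simp only [sphereE, Set.mem_ofPred_eq, Fin.sum_univ_succAbove _ j, Fin.insertNth_apply_same,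
    Fin.insertNth_apply_succAbove]

lemma hasDerivAt_insertNth {n : ℕ} (j : Fin (n + 1)) (y : Fin n → ℝ) (s : ℝ) :
    HasDerivAt (fun s : ℝ => (j.insertNth s y : Fin (n + 1) → ℝ)) (Pi.single j 1) s := by
  convert! hasDerivAt_update (j.insertNth s y : Fin (n + 1) → ℝ) j s using 2
  exact (Fin.update_insertNth ..).symm

lemma continuous_dirDeriv {E : Type*} [NormedAddCommGroup E] [NormedSpace ℝ E] {f : E → ℝ}
    (ξ : E) (hf : ContDiff ℝ 1 f) : Continuous (dirDeriv ξ f) :=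
  (hf.continuous_fderiv one_ne_zero).clm_apply continuous_const

lemma setIntegral_slice_dirDeriv_eq_zero {n : ℕ} {R : ℝ} (j : Fin (n + 1))
    {g : (Fin (n + 1) → ℝ) → ℝ} (hg : ContDiff ℝ 1 g) (h0 : ∀ x ∈ sphereE (n + 1) R, g x = 0)
    (y : Fin n → ℝ) :
    ∫ s in {s | (j.insertNth s y : Fin (n + 1) → ℝ) ∈ ballE (n + 1) R},
      dirDeriv (Pi.single j 1) g (j.insertNth s y) = 0 := by
  set c := √(R ^ 2 - ∑ i, y i ^ 2) with hc
  have hslice : {s | (j.insertNth s y : Fin (n + 1) → ℝ) ∈ ballE (n + 1) R} = Set.Ioo (-c) c :=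
    Set.ext fun s => insertNth_mem_ballE_iff j y
  have hderiv (s : ℝ) : HasDerivAt (fun s : ℝ => g (j.insertNth s y))
      (dirDeriv (Pi.single j 1) g (j.insertNth s y)) s :=
    (hg.differentiable one_ne_zero _).hasFDerivAt.comp_hasDerivAt s (hasDerivAt_insertNth j y s)
  have hcont : Continuous fun s : ℝ => dirDeriv (Pi.single j 1) g (j.insertNth s y) :=
    (continuous_dirDeriv _ hg).comp (by fun_prop)
  have hc0 : -c ≤ c := neg_le_self (Real.sqrt_nonneg _)
  rw [hslice, ← integral_Ioc_eq_integral_Ioo, ← intervalIntegral.integral_of_le hc0,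
    intervalIntegral.integral_eq_sub_of_hasDerivAt (fun s _ => hderiv s)
      (hcont.intervalIntegrable _ _)]
  rcases le_or_gt (R ^ 2 - ∑ i, y i ^ 2) 0 with hneg | hpos
  · simp [hc, Real.sqrt_eq_zero_of_nonpos hneg]
  · have hsq : c ^ 2 = R ^ 2 - ∑ i, y i ^ 2 := Real.sq_sqrt hpos.le
    rw [h0 _ ((insertNth_mem_sphereE_iff j y).2 hsq),
      h0 _ ((insertNth_mem_sphereE_iff j y).2 ((neg_sq c).trans hsq)), sub_zero]

lemma setIntegral_ballE_dirDeriv_eq_zero {R : ℝ} (j : Fin d) {g : (Fin d → ℝ) → ℝ}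
    (hg : ContDiff ℝ 1 g) (h0 : ∀ x ∈ sphereE d R, g x = 0) :
    ∫ x in ballE d R, dirDeriv (Pi.single j 1) g x = 0 := by
  obtain _ | n := d
  · exact j.elim0
  have hmeas : MeasurableSet (ballE (n + 1) R) := (isOpen_ballE R).measurableSet
  have hmp := (volume_preserving_piFinSuccAbove (fun _ : Fin (n + 1) => ℝ) j).symm
  have hint := (hmp.integrable_comp_emb (MeasurableEquiv.measurableEmbedding _)).2
    ((integrableOn_ballE (continuous_dirDeriv (Pi.single j 1) hg) R).integrable_indicator hmeas)
  rw [Function.comp_def] at hint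
  rw [← integral_indicator hmeas, ← hmp.integral_comp', Measure.volume_eq_prod,
    integral_prod_symm _ hint]
  refine integral_eq_zero_of_ae (.of_forall fun y => ?_)
  have hslice : MeasurableSet {s | (j.insertNth s y : Fin (n + 1) → ℝ) ∈ ballE (n + 1) R} :=
    hmeas.preimage (by fun_prop : Continuous fun s : ℝ => _).measurable
  exact (integral_indicator hslice).trans (setIntegral_slice_dirDeriv_eq_zero j hg h0 y)

lemma setIntegral_Qc_pdx_eq_zero {R : ℝ} (j : Fin d) {G : SpaceTime d → ℝ}
    (hG : ContDiff ℝ 1 G) (h0 : ∀ t ∈ Set.Ioo 0 (R ^ 2), ∀ x ∈ sphereE d R, G (t, x) = 0) :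
    ∫ p in Qc d R, pdx j G p = 0 := by
  have hint : IntegrableOn (pdx j G) (Qc d R) := integrableOn_Qc (continuous_dirDeriv _ hG) R
  rw [Qc, Measure.volume_eq_prod] at hint ⊢
  rw [setIntegral_prod _ hint]
  refine setIntegral_eq_zero_of_forall_eq_zero fun t ht => ?_
  rw [← setIntegral_ballE_dirDeriv_eq_zero j (g := fun x => G (t, x)) (by fun_prop) (h0 t ht)]
  rw [dirDeriv_slice (hG.differentiable one_ne_zero)]
  rfl

lemma setIntegral_Qc_pdt_nonpos {R : ℝ} {G : SpaceTime d → ℝ} (hG : ContDiff ℝ 1 G)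
    (htop : ∀ x ∈ ballE d R, G (R ^ 2, x) = 0) (hbot : ∀ x ∈ ballE d R, 0 ≤ G (0, x)) :
    ∫ p in Qc d R, pdt G p ≤ 0 := by
  have hcont : Continuous (pdt G) := continuous_dirDeriv _ hG
  have hint : IntegrableOn (pdt G) (Qc d R) := integrableOn_Qc hcont R
  rw [Qc, IntegrableOn, Measure.volume_eq_prod, ← Measure.prod_restrict] at hint
  rw [Qc, Measure.volume_eq_prod, ← Measure.prod_restrict, integral_prod_symm _ hint]
  refine setIntegral_nonpos (isOpen_ballE R).measurableSet fun x hx => ?_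
  rw [← integral_Ioc_eq_integral_Ioo, ← intervalIntegral.integral_of_le (sq_nonneg R),
    intervalIntegral.integral_eq_sub_of_hasDerivAt
      (fun t _ => hasDerivAt_pdt (hG.differentiable one_ne_zero))
      (Continuous.intervalIntegrable (by fun_prop) _ _)]
  simpa [htop x hx] using hbot x hx

lemma setIntegral_le_of_sub_le_divergence {R : ℝ} {G : SpaceTime d → ℝ}
    {H : Fin d → SpaceTime d → ℝ} (hG : ContDiff ℝ 1 G) (hH : ∀ k, ContDiff ℝ 1 (H k))
    (htop : ∀ x ∈ ballE d R, G (R ^ 2, x) = 0) (hbot : ∀ x ∈ ballE d R, 0 ≤ G (0, x))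
    (hlat : ∀ k, ∀ t ∈ Set.Ioo 0 (R ^ 2), ∀ x ∈ sphereE d R, H k (t, x) = 0)
    {A B : SpaceTime d → ℝ} (hA : Continuous A) (hB : Continuous B)
    (hle : ∀ p ∈ Qc d R, A p - B p ≤ pdt G p + ∑ k, pdx k (H k) p) :
    ∫ p in Qc d R, A p ≤ ∫ p in Qc d R, B p := by
  have hGt : IntegrableOn (pdt G) (Qc d R) := integrableOn_Qc (continuous_dirDeriv _ hG) R
  have hHx (k : Fin d) : IntegrableOn (pdx k (H k)) (Qc d R) :=
    integrableOn_Qc (continuous_dirDeriv _ (hH k)) R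
  have hHsum : IntegrableOn (fun p => ∑ k, pdx k (H k) p) (Qc d R) :=
    integrable_finsetSum _ fun k _ => hHx k
  rw [← sub_nonpos, ← integral_sub (integrableOn_Qc hA R) (integrableOn_Qc hB R)]
  calc ∫ p in Qc d R, (A p - B p)
      ≤ ∫ p in Qc d R, (pdt G p + ∑ k, pdx k (H k) p) :=
        setIntegral_mono_on (integrableOn_Qc (hA.sub hB) R) (hGt.add hHsum)
          (isOpen_Qc R).measurableSet hle
    _ = ∫ p in Qc d R, pdt G p := by
        rw [integral_add hGt hHsum, integral_finsetSum _ fun k _ => hHx k,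
          sum_eq_zero fun k _ => setIntegral_Qc_pdx_eq_zero k (hH k) (hlat k), add_zero]
    _ ≤ 0 := setIntegral_Qc_pdt_nonpos hG htop hbot

end Cylinders

/-! ### The operator and its divergence form -/

section Operator

variable {d : ℕ} {δ : ℝ} {e : Fin d} {a : ℝ → Fin d → Fin d → ℝ} {v ψ : SpaceTime d → ℝ}

/-- Smooth symmetric coefficients of one real variable with ellipticity constant `δ`. -/
structure UniformlyElliptic (δ : ℝ) (a : ℝ → Fin d → Fin d → ℝ) : Prop where
  pos : 0 < δ
  contDiff : ∀ j k, ContDiff ℝ ∞ fun s => a s j k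
  symm : ∀ s j k, a s j k = a s k j
  lower : ∀ (s : ℝ) (θ : Fin d → ℝ), δ * ∑ j, θ j ^ 2 ≤ ∑ j, ∑ k, a s j k * θ j * θ k
  upper : ∀ (s : ℝ) (θ : Fin d → ℝ), ∑ j, ∑ k, a s j k * θ j * θ k ≤ δ⁻¹ * ∑ j, θ j ^ 2

/-- The operator `L₀ v = v_t + ∑ a^{jk}(x^e) v_{x^j x^k}`, whose coefficients depend on the single
space coordinate `x^e`. -/
noncomputable def parabolicOp (e : Fin d) (a : ℝ → Fin d → Fin d → ℝ) (v : SpaceTime d → ℝ) :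
    SpaceTime d → ℝ :=
  fun p => pdt v p + ∑ j, ∑ k, a (p.2 e) j k * pdxx j k v p

/-- The weight `ρ = 1 / a^{ee}`, which brings `ρ L₀` into divergence form. -/
noncomputable def weight (e : Fin d) (a : ℝ → Fin d → Fin d → ℝ) (s : ℝ) : ℝ := (a s e e)⁻¹

/-- The coefficients `b^{kj}` of the divergence form `ρ L₀ v = ρ v_t + ∑ ∂_k (b^{kj} ∂_j v)`.
They have the same symmetric part as `ρ a^{kj}`, and `b^{kj}` depends on `x^e` only if `k ≠ e`:
the entries `b^{ej}` with `j ≠ e` are moved into `b^{je}`. -/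
noncomputable def divCoeff (e : Fin d) (a : ℝ → Fin d → Fin d → ℝ) (k j : Fin d) (s : ℝ) : ℝ :=
  if k = e then (if j = e then 1 else 0)
  else if j = e then 2 * (weight e a s * a s k e) else weight e a s * a s k j

lemma dirDeriv_comp_coord {c : ℝ → ℝ} (hc : Differentiable ℝ c) {ξ : SpaceTime d}
    (hξ : ξ.2 e = 0) (p : SpaceTime d) : dirDeriv ξ (fun q => c (q.2 e)) p = 0 := by
  have hcoord : HasFDerivAt (fun q : SpaceTime d => q.2 e)
      ((ContinuousLinearMap.proj e).comp (ContinuousLinearMap.snd ℝ ℝ (Fin d → ℝ))) p :=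
    ((ContinuousLinearMap.proj e).comp (ContinuousLinearMap.snd ℝ ℝ (Fin d → ℝ))).hasFDerivAt
  have hcomp := ((hc (p.2 e)).hasDerivAt.comp_hasFDerivAt p hcoord).fderiv
  simp only [Function.comp_def] at hcomp
  simp [dirDeriv, hcomp, hξ]

lemma dirDeriv_comp_coord_mul {c : ℝ → ℝ} (hc : Differentiable ℝ c) {ξ : SpaceTime d}
    (hξ : ξ.2 e = 0) {g : SpaceTime d → ℝ} {p : SpaceTime d} (hg : Differentiable ℝ g) :
    dirDeriv ξ (fun q => c (q.2 e) * g q) p = c (p.2 e) * dirDeriv ξ g p := by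
  rw [dirDeriv_mul (by fun_prop) hg, dirDeriv_comp_coord hc hξ, mul_zero, add_zero]

namespace UniformlyElliptic

variable (h : UniformlyElliptic δ a)
include h

lemma le_diag (s : ℝ) (j : Fin d) : δ ≤ a s j j := by
  simpa [Pi.single_apply, ite_pow] using h.lower s (Pi.single j 1)

lemma diag_le (s : ℝ) (j : Fin d) : a s j j ≤ δ⁻¹ := by
  simpa [Pi.single_apply, ite_pow] using h.upper s (Pi.single j 1)

lemma diag_pos (s : ℝ) (j : Fin d) : 0 < a s j j := h.pos.trans_le (h.le_diag s j)

lemma one_le_inv (e : Fin d) : 1 ≤ δ⁻¹ := by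
  have hδ : δ * δ ≤ δ⁻¹ * δ :=
    mul_le_mul_of_nonneg_right ((h.le_diag 0 e).trans (h.diag_le 0 e)) h.pos.le
  rw [inv_mul_cancel₀ h.pos.ne'] at hδ
  exact (one_le_inv₀ h.pos).2 (by nlinarith [h.pos])

lemma abs_le (s : ℝ) (j k : Fin d) : |a s j k| ≤ δ⁻¹ := by
  obtain rfl | _ := eq_or_ne j k
  · rw [abs_of_pos (h.diag_pos s j)]
    exact h.diag_le s j
  have hform (σ : ℝ) : 0 ≤ a s j j + σ ^ 2 * a s k k + 2 * σ * a s j k := by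
    have hσ := (mul_nonneg h.pos.le (sum_nonneg fun i _ => sq_nonneg _)).trans
      (h.lower s (Pi.single j 1 + σ • Pi.single k 1))
    simp only [Pi.add_apply, Pi.smul_apply, Pi.single_apply, smul_eq_mul, mul_add, add_mul,
      mul_ite, ite_mul, mul_one, mul_zero, zero_mul, sum_add_distrib, sum_ite_eq', mem_univ,
      if_true, h.symm s k j] at hσ
    linarith
  have hj := h.diag_le s j
  have hk := h.diag_le s k
  exact _root_.abs_le.2 ⟨by linarith [hform 1], by linarith [hform (-1)]⟩

lemma weight_pos (e : Fin d) (s : ℝ) : 0 < weight e a s := inv_pos.2 (h.diag_pos s e)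

lemma le_weight (e : Fin d) (s : ℝ) : δ ≤ weight e a s :=
  (le_inv_comm₀ h.pos (h.diag_pos s e)).2 (h.diag_le s e)

lemma weight_le (e : Fin d) (s : ℝ) : weight e a s ≤ δ⁻¹ :=
  inv_anti₀ h.pos (h.le_diag s e)

lemma weight_mul_diag (e : Fin d) (s : ℝ) : weight e a s * a s e e = 1 :=
  inv_mul_cancel₀ (h.diag_pos s e).ne'

lemma contDiff_weight (e : Fin d) : ContDiff ℝ ∞ (weight e a) :=
  (h.contDiff e e).inv fun s => (h.diag_pos s e).ne'

lemma contDiff_divCoeff (e k j : Fin d) : ContDiff ℝ ∞ (divCoeff e a k j) := by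
  have hρ := h.contDiff_weight e
  have ha := h.contDiff
  unfold divCoeff
  split_ifs <;> fun_prop

lemma abs_divCoeff_le (e k j : Fin d) (s : ℝ) : |divCoeff e a k j s| ≤ 2 * δ⁻¹ ^ 2 := by
  have hδ := h.one_le_inv e
  have hδ2 : 1 ≤ δ⁻¹ ^ 2 := one_le_pow₀ hδ
  have hprod (k j : Fin d) : |weight e a s * a s k j| ≤ δ⁻¹ ^ 2 := by
    rw [abs_mul, abs_of_pos (h.weight_pos e s), sq]
    exact mul_le_mul (h.weight_le e s) (h.abs_le s k j) (abs_nonneg _) (by linarith)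
  unfold divCoeff
  split_ifs
  · rw [abs_one]; linarith
  · rw [abs_zero]; linarith
  · rw [abs_mul, abs_two]; linarith [hprod k e]
  · linarith [hprod k j]

lemma pdx_divCoeff_mul (e k j : Fin d) {g : SpaceTime d → ℝ} {p : SpaceTime d}
    (hg : Differentiable ℝ g) :
    pdx k (fun q => divCoeff e a k j (q.2 e) * g q) p
      = divCoeff e a k j (p.2 e) * pdx k g p := by
  obtain rfl | hk := eq_or_ne k e
  · simp only [divCoeff, if_true]
    rw [pdx_mul k (by fun_prop) hg]
    simp [pdx]
  · exact dirDeriv_comp_coord_mul ((h.contDiff_divCoeff e k j).differentiable (by simp))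
      (by simp [hk.symm]) hg

lemma divCoeff_add_divCoeff (e k j : Fin d) (s : ℝ) :
    divCoeff e a k j s + divCoeff e a j k s = 2 * (weight e a s * a s k j) := by
  have hdiag := h.weight_mul_diag e s
  have hsymm := h.symm s k j
  unfold divCoeff
  split_ifs with hk hj hj
  · subst hk hj; linarith
  · subst hk; rw [hsymm]; ring
  · subst hj; ring
  · rw [hsymm]; ring

lemma sum_divCoeff_mul (e : Fin d) (s : ℝ) {S : Fin d → Fin d → ℝ} (hS : ∀ j k, S j k = S k j) :
    ∑ k, ∑ j, divCoeff e a k j s * S k j = weight e a s * ∑ k, ∑ j, a s k j * S k j := by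
  have hswap : ∑ k, ∑ j, divCoeff e a k j s * S k j = ∑ k, ∑ j, divCoeff e a j k s * S k j := by
    rw [sum_comm]
    simp only [hS]
  refine mul_left_cancel₀ (two_ne_zero' ℝ) ?_
  calc 2 * ∑ k, ∑ j, divCoeff e a k j s * S k j
      = ∑ k, ∑ j, (divCoeff e a k j s + divCoeff e a j k s) * S k j := by
        simp only [add_mul, sum_add_distrib, ← hswap, two_mul]
    _ = 2 * (weight e a s * ∑ k, ∑ j, a s k j * S k j) := by
        simp only [h.divCoeff_add_divCoeff, mul_sum, mul_assoc]

lemma le_sum_divCoeff_mul (e : Fin d) (s : ℝ) (θ : Fin d → ℝ) :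
    δ ^ 2 * ∑ j, θ j ^ 2 ≤ ∑ k, ∑ j, divCoeff e a k j s * (θ k * θ j) := by
  rw [h.sum_divCoeff_mul e s fun j k => mul_comm (θ j) (θ k), sq, mul_assoc]
  refine mul_le_mul (h.le_weight e s) ?_
    (mul_nonneg h.pos.le (sum_nonneg fun j _ => sq_nonneg _)) (h.weight_pos e s).le
  simpa only [mul_assoc] using h.lower s θ

lemma weight_mul_parabolicOp (e : Fin d) (hv : ContDiff ℝ ∞ v) (p : SpaceTime d) :
    weight e a (p.2 e) * parabolicOp e a v p = weight e a (p.2 e) * pdt v p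
      + ∑ k, ∑ j, divCoeff e a k j (p.2 e) * pdx k (pdx j v) p := by
  rw [h.sum_divCoeff_mul e (p.2 e) fun j k => congrFun (pdx_comm hv j k) p, ← mul_add]
  rfl

lemma pdx_pdx_self_eq (e : Fin d) (hv : ContDiff ℝ ∞ v) (p : SpaceTime d) :
    pdx e (pdx e v) p = weight e a (p.2 e) * (parabolicOp e a v p - pdt v p)
      - ∑ k ∈ univ.erase e, ∑ j, divCoeff e a k j (p.2 e) * pdx k (pdx j v) p := by
  have hself : ∑ j, divCoeff e a e j (p.2 e) * pdx e (pdx j v) p = pdx e (pdx e v) p := by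
    simp [divCoeff]
  rw [mul_sub, h.weight_mul_parabolicOp e hv, ← add_sum_erase univ _ (mem_univ e), hself]
  ring

lemma pdt_add_sum_pdx_energyFlux (e : Fin d) (hv : ContDiff ℝ ∞ v) (hψ : ContDiff ℝ ∞ ψ)
    (p : SpaceTime d) :
    pdt (fun q => weight e a (q.2 e) * (ψ q * v q ^ 2)) p
        + ∑ k, pdx k (fun q => ∑ j, divCoeff e a k j (q.2 e) * (2 * ψ q * v q * pdx j v q)) p
      = 2 * ψ p * v p * (weight e a (p.2 e) * parabolicOp e a v p)
        + 2 * ψ p * ∑ k, ∑ j, divCoeff e a k j (p.2 e) * (pdx k v p * pdx j v p)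
        + 2 * v p * ∑ k, ∑ j, divCoeff e a k j (p.2 e) * (pdx k ψ p * pdx j v p)
        + weight e a (p.2 e) * v p ^ 2 * pdt ψ p := by
  have hρ := h.contDiff_weight e
  have hB := h.contDiff_divCoeff e
  have htime : pdt (fun q => weight e a (q.2 e) * (ψ q * v q ^ 2)) p
      = weight e a (p.2 e) * (ψ p * (2 * v p * pdt v p) + v p ^ 2 * pdt ψ p) := by
    rw [← pdt_sq (by fun_prop (disch := simp)),
      ← pdt_mul (by fun_prop (disch := simp)) (by fun_prop (disch := simp))]
    exact dirDeriv_comp_coord_mul (hρ.differentiable (by simp)) rfl (by fun_prop (disch := simp))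
  have hspace (k j : Fin d) :
      pdx k (fun q => divCoeff e a k j (q.2 e) * (2 * ψ q * v q * pdx j v q)) p
        = 2 * ψ p * v p * (divCoeff e a k j (p.2 e) * pdx k (pdx j v) p)
          + 2 * ψ p * (divCoeff e a k j (p.2 e) * (pdx k v p * pdx j v p))
          + 2 * v p * (divCoeff e a k j (p.2 e) * (pdx k ψ p * pdx j v p)) := by
    have hconst : pdx k (fun _ => (2 : ℝ)) p = 0 := dirDeriv_const 2
    rw [h.pdx_divCoeff_mul e k j (by fun_prop (disch := simp))]
    simp (disch := fun_prop (disch := simp)) only [pdx_mul, hconst]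
    ring
  rw [h.weight_mul_parabolicOp e hv, htime]
  simp (disch := fun_prop (disch := simp)) only [pdx_sum, hspace, sum_add_distrib, mul_add,
    ← mul_sum]
  ring

end UniformlyElliptic

end Operator

/-! ### Energy estimates -/

section Young

lemma neg_sq_add_sq_le_two_mul {η : ℝ} (hη : 0 < η) (x y : ℝ) :
    -(η * x ^ 2 + η⁻¹ * y ^ 2) ≤ 2 * x * y := by
  have hsq : η * x ^ 2 + η⁻¹ * y ^ 2 + 2 * x * y = η⁻¹ * (η * x + y) ^ 2 := by
    field_simp
    ring
  have hnonneg : 0 ≤ η⁻¹ * (η * x + y) ^ 2 := by positivity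
  linarith

lemma neg_sum_sq_add_sum_sq_le {ι : Type*} {s : Finset ι} {η : ℝ} (hη : 0 < η) (x y : ι → ℝ) :
    -(η * ∑ i ∈ s, x i ^ 2 + η⁻¹ * ∑ i ∈ s, y i ^ 2) ≤ ∑ i ∈ s, 2 * x i * y i := by
  rw [mul_sum, mul_sum, ← sum_add_distrib, ← sum_neg_distrib]
  exact sum_le_sum fun i _ => neg_sq_add_sq_le_two_mul hη (x i) (y i)

lemma sq_sum_mul_le {ι : Type*} {s : Finset ι} {b x : ι → ℝ} {B : ℝ} (hb : ∀ i ∈ s, |b i| ≤ B) :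
    (∑ i ∈ s, b i * x i) ^ 2 ≤ s.card * B ^ 2 * ∑ i ∈ s, x i ^ 2 := by
  have hterm : ∀ i ∈ s, (b i * x i) ^ 2 ≤ B ^ 2 * x i ^ 2 := fun i hi => by
    rw [mul_pow]
    exact mul_le_mul_of_nonneg_right (sq_le_sq' (neg_le_of_abs_le (hb i hi))
      (le_of_abs_le (hb i hi))) (sq_nonneg _)
  calc (∑ i ∈ s, b i * x i) ^ 2 ≤ s.card * ∑ i ∈ s, (b i * x i) ^ 2 := sq_sum_le_card_mul_sum_sq
    _ ≤ s.card * (B ^ 2 * ∑ i ∈ s, x i ^ 2) := by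
        rw [mul_sum _ _ (B ^ 2)]
        exact mul_le_mul_of_nonneg_left (sum_le_sum hterm) (Nat.cast_nonneg _)
    _ = s.card * B ^ 2 * ∑ i ∈ s, x i ^ 2 := (mul_assoc ..).symm

end Young

section Cutoff

variable {d : ℕ} {r R : ℝ} {p : SpaceTime d}

/-- A cutoff function for `Q_R`: smooth, positive inside, zero on the parabolic boundary. -/
def cutoff (R : ℝ) (p : SpaceTime d) : ℝ := (R ^ 2 - ∑ i, p.2 i ^ 2) * (R ^ 2 - p.1)

/-- A common bound for `cutoff R` and its first derivatives on `Q_R`. -/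
def cutoffBound (R : ℝ) : ℝ := R ^ 4 + 2 * R ^ 3 + R ^ 2

@[fun_prop]
lemma contDiff_cutoff (R : ℝ) : ContDiff ℝ ∞ (cutoff (d := d) R) := by
  unfold cutoff
  fun_prop

lemma cutoff_top (R : ℝ) (x : Fin d → ℝ) : cutoff R (R ^ 2, x) = 0 := by simp [cutoff]

lemma cutoff_of_mem_sphereE (t : ℝ) {x : Fin d → ℝ} (hx : x ∈ sphereE d R) :
    cutoff R (t, x) = 0 := by
  have hx : ∑ j, x j ^ 2 = R ^ 2 := hx
  simp [cutoff, hx]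

lemma dirDeriv_cutoff (R : ℝ) (ξ p : SpaceTime d) :
    dirDeriv ξ (cutoff R) p
      = -((R ^ 2 - ∑ i, p.2 i ^ 2) * ξ.1 + (R ^ 2 - p.1) * ∑ i, 2 * p.2 i * ξ.2 i) := by
  have hcoord (i : Fin d) : HasFDerivAt (fun q : SpaceTime d => q.2 i)
      ((ContinuousLinearMap.proj i).comp (ContinuousLinearMap.snd ℝ ℝ (Fin d → ℝ))) p :=
    ((ContinuousLinearMap.proj i).comp (ContinuousLinearMap.snd ℝ ℝ (Fin d → ℝ))).hasFDerivAt
  have hcutoff : HasFDerivAt (cutoff R) _ p :=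
    ((HasFDerivAt.fun_sum (u := univ) fun i _ => (hcoord i).pow 2).const_sub (R ^ 2)).mul
      (hasFDerivAt_fst.const_sub (R ^ 2))
  simp only [dirDeriv, hcutoff.fderiv]
  simp
  ring

lemma pdt_cutoff (R : ℝ) (p : SpaceTime d) :
    pdt (cutoff R) p = -(R ^ 2 - ∑ i, p.2 i ^ 2) :=
  (dirDeriv_cutoff R (1, 0) p).trans (by simp)

lemma pdx_cutoff (R : ℝ) (k : Fin d) (p : SpaceTime d) :
    pdx k (cutoff R) p = -((R ^ 2 - p.1) * (2 * p.2 k)) :=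
  (dirDeriv_cutoff R (0, Pi.single k 1) p).trans (by simp [Pi.single_apply])

lemma sub_time_mem_Icc_of_mem_Qc (hp : p ∈ Qc d R) : R ^ 2 - p.1 ∈ Set.Icc 0 (R ^ 2) :=
  ⟨sub_nonneg.2 hp.1.2.le, sub_le_self _ hp.1.1.le⟩

lemma sub_sum_sq_mem_Icc_of_mem_Qc (hp : p ∈ Qc d R) :
    R ^ 2 - ∑ i, p.2 i ^ 2 ∈ Set.Icc 0 (R ^ 2) :=
  ⟨sub_nonneg.2 (le_of_lt hp.2), sub_le_self _ (sum_nonneg fun _ _ => sq_nonneg _)⟩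

lemma abs_cutoff_le (hR : 0 ≤ R) (hp : p ∈ Qc d R) : |cutoff R p| ≤ cutoffBound R := by
  obtain ⟨hx0, hx⟩ := sub_sum_sq_mem_Icc_of_mem_Qc hp
  obtain ⟨ht0, ht⟩ := sub_time_mem_Icc_of_mem_Qc hp
  rw [cutoff, abs_of_nonneg (mul_nonneg hx0 ht0)]
  calc _ ≤ R ^ 2 * R ^ 2 := mul_le_mul hx ht ht0 (sq_nonneg R)
    _ ≤ cutoffBound R := by
      have : 0 ≤ 2 * R ^ 3 + R ^ 2 := by positivity
      rw [cutoffBound]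
      linarith

lemma abs_pdt_cutoff_le (hR : 0 ≤ R) (hp : p ∈ Qc d R) :
    |pdt (cutoff R) p| ≤ cutoffBound R := by
  obtain ⟨hx0, hx⟩ := sub_sum_sq_mem_Icc_of_mem_Qc hp
  have : 0 ≤ R ^ 4 + 2 * R ^ 3 := by positivity
  rw [pdt_cutoff, abs_neg, abs_of_nonneg hx0, cutoffBound]
  linarith

lemma abs_pdx_cutoff_le (hR : 0 ≤ R) (hp : p ∈ Qc d R) (k : Fin d) :
    |pdx k (cutoff R) p| ≤ cutoffBound R := by
  obtain ⟨ht0, ht⟩ := sub_time_mem_Icc_of_mem_Qc hp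
  have hk : |p.2 k| ≤ R := (abs_le_of_mem_ballE hp.2 k).trans_eq (abs_of_nonneg hR)
  rw [pdx_cutoff, abs_neg, abs_mul, abs_mul, abs_two, abs_of_nonneg ht0]
  calc _ ≤ R ^ 2 * (2 * R) := by gcongr
    _ ≤ cutoffBound R := by
      have : 0 ≤ R ^ 4 + R ^ 2 := by positivity
      rw [cutoffBound]
      linarith

lemma le_cutoff_of_mem_Qc (hr : 0 ≤ r) (hrR : r < R) (hp : p ∈ Qc d r) :
    (R ^ 2 - r ^ 2) ^ 2 ≤ cutoff R p := by
  have hsq : r ^ 2 < R ^ 2 := by gcongr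
  obtain ⟨⟨-, ht⟩, hx⟩ := hp
  have hx : ∑ i, p.2 i ^ 2 < r ^ 2 := hx
  rw [cutoff, sq (R ^ 2 - r ^ 2)]
  exact mul_le_mul (by linarith) (by linarith) (by linarith) (by linarith)

lemma sq_sub_sq_pos_of_lt (hr : 0 ≤ r) (hrR : r < R) : 0 < R ^ 2 - r ^ 2 :=
  sub_pos.2 (by gcongr)

lemma setIntegral_Qc_le_cutoff (hr : 0 ≤ r) (hrR : r < R) {f : SpaceTime d → ℝ}
    (hf : Continuous f) (hf0 : ∀ p, 0 ≤ f p) :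
    ∫ p in Qc d r, f p ≤ ((R ^ 2 - r ^ 2) ^ 4)⁻¹ * ∫ p in Qc d R, cutoff R p ^ 2 * f p := by
  have hgap : 0 < (R ^ 2 - r ^ 2) ^ 4 := pow_pos (sq_sub_sq_pos_of_lt hr hrR) 4
  have hcont : Continuous fun p : SpaceTime d => cutoff R p ^ 2 * f p := by fun_prop
  rw [le_inv_mul_iff₀ hgap, ← integral_const_mul]
  calc ∫ p in Qc d r, (R ^ 2 - r ^ 2) ^ 4 * f p
      ≤ ∫ p in Qc d r, cutoff R p ^ 2 * f p := by
        refine setIntegral_mono_on (integrableOn_Qc (by fun_prop) r) (integrableOn_Qc hcont r)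
          (isOpen_Qc r).measurableSet fun p hp => mul_le_mul_of_nonneg_right ?_ (hf0 p)
        rw [show (R ^ 2 - r ^ 2) ^ 4 = ((R ^ 2 - r ^ 2) ^ 2) ^ 2 by ring]
        exact pow_le_pow_left₀ (sq_nonneg _) (le_cutoff_of_mem_Qc hr hrR hp) 2
    _ ≤ ∫ p in Qc d R, cutoff R p ^ 2 * f p :=
        setIntegral_Qc_mono hr hrR.le hcont fun p => mul_nonneg (sq_nonneg _) (hf0 p)

end Cutoff

section GradientEstimates

variable {d : ℕ} {δ R : ℝ} {e : Fin d} {a : ℝ → Fin d → Fin d → ℝ}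

lemma UniformlyElliptic.contDiff_parabolicOp (h : UniformlyElliptic δ a) (e : Fin d)
    {v : SpaceTime d → ℝ} (hv : ContDiff ℝ ∞ v) : ContDiff ℝ ∞ (parabolicOp e a v) := by
  have ha := h.contDiff
  unfold parabolicOp pdxx
  fun_prop

lemma UniformlyElliptic.energy_le_divergence (h : UniformlyElliptic δ a) {w : SpaceTime d → ℝ}
    (hw : ContDiff ℝ ∞ w) {p : SpaceTime d} (hp : p ∈ Qc d R) :
    δ ^ 2 * ∑ j, pdx j w p ^ 2 - δ⁻¹ ^ 3 * (1 + R ^ 2) ^ 2 * parabolicOp e a w p ^ 2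
      ≤ pdt (fun q => weight e a (q.2 e) * ((1 + q.1) * w q ^ 2)) p
        + ∑ k, pdx k
          (fun q => ∑ j, divCoeff e a k j (q.2 e) * (2 * (1 + q.1) * w q * pdx j w q)) p := by
  have hψt : pdt (fun q : SpaceTime d => 1 + q.1) p = 1 := by simp [pdt, fderiv_fst]
  have hψx (k : Fin d) : pdx k (fun q : SpaceTime d => 1 + q.1) p = 0 := by simp [pdx, fderiv_fst]
  have hδ := h.pos
  have hρ0 := h.weight_pos e (p.2 e)
  have hψ0 : 0 < 1 + p.1 := by linarith [hp.1.1]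
  have hform := h.le_sum_divCoeff_mul e (p.2 e) fun j => pdx j w p
  have hgrad : 0 ≤ δ ^ 2 * ∑ j, pdx j w p ^ 2 :=
    mul_nonneg (sq_nonneg δ) (sum_nonneg fun _ _ => sq_nonneg _)
  have hcoercive := mul_le_mul (by linarith [hp.1.1] : 1 ≤ 2 * (1 + p.1)) hform hgrad
    (by linarith)
  have hmass := mul_le_mul_of_nonneg_right (h.le_weight e (p.2 e)) (sq_nonneg (w p))
  have hsource : ((1 + p.1) * weight e a (p.2 e) * parabolicOp e a w p) ^ 2
      ≤ (1 + R ^ 2) ^ 2 * δ⁻¹ ^ 2 * parabolicOp e a w p ^ 2 := by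
    rw [mul_pow, mul_pow]
    gcongr
    · exact hp.1.2.le
    · exact h.weight_le e (p.2 e)
  have hyoung := neg_sq_add_sq_le_two_mul hδ (w p)
    ((1 + p.1) * weight e a (p.2 e) * parabolicOp e a w p)
  have hsource' := mul_le_mul_of_nonneg_left hsource (inv_pos.2 hδ).le
  rw [h.pdt_add_sum_pdx_energyFlux e hw (ψ := fun q => 1 + q.1) (by fun_prop)]
  simp only [hψt, hψx, zero_mul, mul_zero, sum_const_zero]
  linarith

lemma UniformlyElliptic.setIntegral_grad_le_of_eq_zero_on_pbQc (h : UniformlyElliptic δ a)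
    {w : SpaceTime d → ℝ} (hw : ContDiff ℝ ∞ w) (hbdry : ∀ p ∈ pbQc d R, w p = 0) :
    ∫ p in Qc d R, ∑ j, pdx j w p ^ 2
      ≤ δ⁻¹ ^ 5 * (1 + R ^ 2) ^ 2 * ∫ p in Qc d R, parabolicOp e a w p ^ 2 := by
  have hδ := h.pos
  have hρ := h.contDiff_weight e
  have hB := h.contDiff_divCoeff e
  have hL := (h.contDiff_parabolicOp e hw).continuous
  have htop (x) (hx : x ∈ ballE d R) : w (R ^ 2, x) = 0 := hbdry _ (.inr ⟨rfl, hx⟩)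
  have hlat (t) (ht : t ∈ Set.Ioo 0 (R ^ 2)) (x) (hx : x ∈ sphereE d R) : w (t, x) = 0 :=
    hbdry _ (.inl ⟨Set.Ioo_subset_Icc_self ht, hx⟩)
  have henergy : ∫ p in Qc d R, δ ^ 2 * ∑ j, pdx j w p ^ 2
      ≤ ∫ p in Qc d R, δ⁻¹ ^ 3 * (1 + R ^ 2) ^ 2 * parabolicOp e a w p ^ 2 := by
    refine setIntegral_le_of_sub_le_divergence
      (G := fun q => weight e a (q.2 e) * ((1 + q.1) * w q ^ 2))
      (H := fun k q => ∑ j, divCoeff e a k j (q.2 e) * (2 * (1 + q.1) * w q * pdx j w q))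
      (ContDiff.of_le (n := ∞) (by fun_prop) (by simp))
      (fun k => ContDiff.of_le (n := ∞) (by fun_prop) (by simp)) (fun x hx => by simp [htop x hx])
      (fun x _ => ?_) (fun k t ht x hx => by simp [hlat t ht x hx]) (by fun_prop) (by fun_prop)
      fun p hp => ?_
    · have := h.weight_pos e (x e)
      positivity
    · exact h.energy_le_divergence hw hp
  rw [integral_const_mul, integral_const_mul] at henergy
  calc ∫ p in Qc d R, ∑ j, pdx j w p ^ 2
      = δ⁻¹ ^ 2 * (δ ^ 2 * ∫ p in Qc d R, ∑ j, pdx j w p ^ 2) := by field_simp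
    _ ≤ δ⁻¹ ^ 2 * (δ⁻¹ ^ 3 * (1 + R ^ 2) ^ 2 * ∫ p in Qc d R, parabolicOp e a w p ^ 2) := by
        gcongr
    _ = δ⁻¹ ^ 5 * (1 + R ^ 2) ^ 2 * ∫ p in Qc d R, parabolicOp e a w p ^ 2 := by ring

end GradientEstimates

section Caccioppoli

variable {d : ℕ} {δ r R : ℝ} {e : Fin d} {a : ℝ → Fin d → Fin d → ℝ}

lemma UniformlyElliptic.sum_pdx_weight_mul (h : UniformlyElliptic δ a) {g : SpaceTime d → ℝ}
    (hg : ContDiff ℝ ∞ g) {F : Fin d → SpaceTime d → ℝ} (hF : ∀ k, ContDiff ℝ ∞ (F k))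
    (hFe : F e = 0) (p : SpaceTime d) :
    ∑ k, pdx k (fun q => weight e a (q.2 e) * (g q * F k q)) p
      = weight e a (p.2 e) * (g p * ∑ k, pdx k (F k) p + ∑ k, pdx k g p * F k p) := by
  have hterm (k : Fin d) : pdx k (fun q => weight e a (q.2 e) * (g q * F k q)) p
      = weight e a (p.2 e) * (g p * pdx k (F k) p + pdx k g p * F k p) := by
    obtain rfl | hk := eq_or_ne k e
    · simp [hFe, pdx, Pi.zero_def]
    · rw [mul_comm (pdx k g p), ← pdx_mul k (by fun_prop (disch := simp))
        (by fun_prop (disch := simp))]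
      exact dirDeriv_comp_coord_mul ((h.contDiff_weight e).differentiable (by simp))
        (by simp [hk.symm]) (by fun_prop (disch := simp))
  simp only [hterm, mul_add, sum_add_distrib, mul_sum]

/-- The constant in the pointwise form of Caccioppoli's inequality when the cutoff function and its
first derivatives are bounded by `M`. -/
noncomputable def caccioppoliConst (d : ℕ) (δ M : ℝ) : ℝ :=
  8 * d ^ 3 * (2 * δ⁻¹ ^ 2) ^ 2 * M ^ 2 * δ⁻¹ ^ 2 + 2 * δ⁻¹ * M ^ 2 + 1
    + 2 * δ⁻¹ ^ 4 * M ^ 2 + 4 * d * δ⁻¹ ^ 2 * M ^ 4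

lemma UniformlyElliptic.abs_weight_mul_le (h : UniformlyElliptic δ a) (s : ℝ) {M z : ℝ}
    (hz : |z| ≤ M) : |weight e a s * z| ≤ δ⁻¹ * M := by
  rw [abs_mul, abs_of_pos (h.weight_pos e s)]
  exact mul_le_mul (h.weight_le e s) hz (abs_nonneg z) (inv_pos.2 h.pos).le

lemma UniformlyElliptic.sum_sq_crossTerm_le (h : UniformlyElliptic δ a) (s : ℝ) {M z v : ℝ}
    {ζ F : Fin d → ℝ} (hz : |z| ≤ M) (hζ : ∀ k, |ζ k| ≤ M) :
    ∑ j, (2 * v * (∑ k, divCoeff e a k j s * ζ k) - weight e a s * z * F j) ^ 2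
      ≤ 8 * d ^ 3 * (2 * δ⁻¹ ^ 2) ^ 2 * M ^ 2 * v ^ 2 + 2 * δ⁻¹ ^ 2 * M ^ 2 * ∑ j, F j ^ 2 := by
  have hδ := h.pos
  have hcoeff (j : Fin d) : (∑ k, divCoeff e a k j s * ζ k) ^ 2
      ≤ d ^ 2 * (2 * δ⁻¹ ^ 2) ^ 2 * M ^ 2 := by
    have hsum : ∑ k, ζ k ^ 2 ≤ d * M ^ 2 := by
      simpa using sum_le_card_nsmul univ _ (M ^ 2) fun k _ => sq_le_sq' (neg_le_of_abs_le (hζ k))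
        (le_of_abs_le (hζ k))
    have hcs := sq_sum_mul_le (s := univ) (x := ζ) fun k _ => h.abs_divCoeff_le e k j s
    rw [card_univ, Fintype.card_fin] at hcs
    calc _ ≤ d * (2 * δ⁻¹ ^ 2) ^ 2 * ∑ k, ζ k ^ 2 := hcs
      _ ≤ d * (2 * δ⁻¹ ^ 2) ^ 2 * (d * M ^ 2) := by gcongr
      _ = d ^ 2 * (2 * δ⁻¹ ^ 2) ^ 2 * M ^ 2 := by ring
  have hρz : (weight e a s * z) ^ 2 ≤ δ⁻¹ ^ 2 * M ^ 2 := by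
    rw [← sq_abs, ← mul_pow]
    exact pow_le_pow_left₀ (abs_nonneg _) (h.abs_weight_mul_le s hz) 2
  have hterm (j : Fin d) :
      (2 * v * (∑ k, divCoeff e a k j s * ζ k) - weight e a s * z * F j) ^ 2
        ≤ 8 * d ^ 2 * (2 * δ⁻¹ ^ 2) ^ 2 * M ^ 2 * v ^ 2 + 2 * δ⁻¹ ^ 2 * M ^ 2 * F j ^ 2 := by
    have h₁ := mul_le_mul_of_nonneg_left (hcoeff j) (sq_nonneg v)
    have h₂ := mul_le_mul_of_nonneg_right hρz (sq_nonneg (F j))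
    have h₃ := add_sq_le (a := 2 * v * ∑ k, divCoeff e a k j s * ζ k)
      (b := -(weight e a s * z * F j))
    rw [← sub_eq_add_neg] at h₃
    linarith
  calc _ ≤ ∑ j, (8 * d ^ 2 * (2 * δ⁻¹ ^ 2) ^ 2 * M ^ 2 * v ^ 2 + 2 * δ⁻¹ ^ 2 * M ^ 2 * F j ^ 2) :=
        sum_le_sum fun j _ => hterm j
    _ = _ := by
        simp only [sum_add_distrib, ← mul_sum, sum_const, card_univ, Fintype.card_fin,
          nsmul_eq_mul]
        ring

/-- Here `z`, `zt` and `ζ` are the values of a cutoff function and its time and space derivatives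
at a point, and `θ = z ∇v`. -/
lemma UniformlyElliptic.caccioppoli_pointwise (h : UniformlyElliptic δ a) (s : ℝ)
    {M z zt v : ℝ} {ζ θ F : Fin d → ℝ} (hz : |z| ≤ M) (hzt : |zt| ≤ M) (hζ : ∀ k, |ζ k| ≤ M) :
    δ ^ 2 * ∑ j, θ j ^ 2 - caccioppoliConst d δ M * (v ^ 2 + ∑ j, F j ^ 2)
      ≤ 2 * (∑ k, ∑ j, divCoeff e a k j s * (θ k * θ j))
        + 4 * v * (∑ k, ∑ j, divCoeff e a k j s * (ζ k * θ j))
        + 2 * weight e a s * z * zt * v ^ 2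
        - 2 * weight e a s * (∑ j, θ j * F j) * z - 4 * weight e a s * z * v * ∑ j, ζ j * F j := by
  have hδ := h.pos
  have hM : 0 ≤ M := (abs_nonneg z).trans hz
  have hcross : ∑ j, 2 * θ j
        * (2 * v * (∑ k, divCoeff e a k j s * ζ k) - weight e a s * z * F j)
      = 4 * v * (∑ k, ∑ j, divCoeff e a k j s * (ζ k * θ j))
        - 2 * weight e a s * (∑ j, θ j * F j) * z := by
    rw [sum_comm]
    simp only [mul_sub, sum_sub_distrib, mul_sum, sum_mul]
    congr 1
    · exact sum_congr rfl fun j _ => sum_congr rfl fun k _ => by ring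
    · exact sum_congr rfl fun j _ => by ring
  have hcoercive := h.le_sum_divCoeff_mul e s θ
  have hyoung := neg_sum_sq_add_sum_sq_le (s := univ) (pow_pos hδ 2) θ
    fun j => 2 * v * (∑ k, divCoeff e a k j s * ζ k) - weight e a s * z * F j
  have hsq := mul_le_mul_of_nonneg_left
    (h.sum_sq_crossTerm_le (e := e) (v := v) (F := F) s hz hζ) (inv_nonneg.2 (sq_nonneg δ))
  have htime : -(2 * δ⁻¹ * M ^ 2 * v ^ 2) ≤ 2 * weight e a s * z * zt * v ^ 2 := by
    have hρzt : |weight e a s * z * zt| ≤ δ⁻¹ * M * M := by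
      rw [abs_mul]
      exact mul_le_mul (h.abs_weight_mul_le s hz) hzt (abs_nonneg zt) (by positivity)
    have := mul_le_mul_of_nonneg_right (neg_le_of_abs_le hρzt) (sq_nonneg v)
    linarith
  have hlast : -(v ^ 2 + 4 * d * δ⁻¹ ^ 2 * M ^ 4 * ∑ j, F j ^ 2)
      ≤ -(4 * weight e a s * z * v * ∑ j, ζ j * F j) := by
    have hcs := sq_sum_mul_le (s := univ) (x := F) fun j _ => hζ j
    rw [card_univ, Fintype.card_fin] at hcs
    have hρz := pow_le_pow_left₀ (abs_nonneg _) (h.abs_weight_mul_le (e := e) s hz) 2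
    rw [sq_abs] at hρz
    have := mul_le_mul hρz hcs (sq_nonneg _) (by positivity)
    have := neg_sq_add_sq_le_two_mul one_pos v (-(2 * (weight e a s * z) * ∑ j, ζ j * F j))
    rw [inv_one, one_mul, one_mul] at this
    linarith
  have hA : 0 ≤ (8 * d ^ 3 * (2 * δ⁻¹ ^ 2) ^ 2 * M ^ 2 * δ⁻¹ ^ 2 + 2 * δ⁻¹ * M ^ 2 + 1)
    * ∑ j, F j ^ 2 := by positivity
  have hB : 0 ≤ (2 * δ⁻¹ ^ 4 * M ^ 2 + 4 * d * δ⁻¹ ^ 2 * M ^ 4) * v ^ 2 := by positivity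
  rw [← inv_pow] at hyoung hsq
  rw [caccioppoliConst]
  linarith

lemma UniformlyElliptic.pdt_add_sum_pdx_energyFlux_sub (h : UniformlyElliptic δ a)
    {v ψ : SpaceTime d → ℝ} (hv : ContDiff ℝ ∞ v) (hψ : ContDiff ℝ ∞ ψ)
    {F : Fin d → SpaceTime d → ℝ} (hF : ∀ k, ContDiff ℝ ∞ (F k)) (hFe : F e = 0)
    {p : SpaceTime d} (hL : parabolicOp e a v p = ∑ k, pdx k (F k) p) :
    pdt (fun q => weight e a (q.2 e) * (ψ q * v q ^ 2)) p
        + ∑ k, pdx k (fun q => (∑ j, divCoeff e a k j (q.2 e) * (2 * ψ q * v q * pdx j v q))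
          - weight e a (q.2 e) * (2 * ψ q * v q * F k q)) p
      = 2 * ψ p * ∑ k, ∑ j, divCoeff e a k j (p.2 e) * (pdx k v p * pdx j v p)
        + 2 * v p * ∑ k, ∑ j, divCoeff e a k j (p.2 e) * (pdx k ψ p * pdx j v p)
        + weight e a (p.2 e) * v p ^ 2 * pdt ψ p
        - 2 * weight e a (p.2 e) * ∑ j, (ψ p * pdx j v p + v p * pdx j ψ p) * F j p := by
  have hρ := h.contDiff_weight e
  have hB := h.contDiff_divCoeff e
  have hsub (k : Fin d) : pdx k (fun q =>
        (∑ j, divCoeff e a k j (q.2 e) * (2 * ψ q * v q * pdx j v q))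
          - weight e a (q.2 e) * (2 * ψ q * v q * F k q)) p
      = pdx k (fun q => ∑ j, divCoeff e a k j (q.2 e) * (2 * ψ q * v q * pdx j v q)) p
        - pdx k (fun q => weight e a (q.2 e) * (2 * ψ q * v q * F k q)) p :=
    dirDeriv_sub (by fun_prop (disch := simp)) (by fun_prop (disch := simp))
  have hgrad (k : Fin d) : pdx k (fun q => 2 * ψ q * v q) p
      = 2 * (ψ p * pdx k v p + v p * pdx k ψ p) := by
    have hconst : pdx k (fun _ => (2 : ℝ)) p = 0 := dirDeriv_const 2
    simp (disch := fun_prop (disch := simp)) only [pdx_mul, hconst]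
    ring
  simp only [hsub, sum_sub_distrib]
  rw [h.sum_pdx_weight_mul (by fun_prop) hF hFe, ← add_sub_assoc,
    h.pdt_add_sum_pdx_energyFlux e hv hψ, hL]
  simp only [hgrad]
  simp only [mul_assoc, ← mul_sum]
  ring

lemma UniformlyElliptic.caccioppoli_le_divergence (h : UniformlyElliptic δ a) (hR : 0 ≤ R)
    {v : SpaceTime d → ℝ} (hv : ContDiff ℝ ∞ v) {F : Fin d → SpaceTime d → ℝ}
    (hF : ∀ k, ContDiff ℝ ∞ (F k)) (hFe : F e = 0) {p : SpaceTime d} (hp : p ∈ Qc d R)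
    (hL : parabolicOp e a v p = ∑ k, pdx k (F k) p) :
    δ ^ 2 * (cutoff R p ^ 2 * ∑ j, pdx j v p ^ 2)
        - caccioppoliConst d δ (cutoffBound R) * (v p ^ 2 + ∑ k, F k p ^ 2)
      ≤ pdt (fun q => weight e a (q.2 e) * (cutoff R q ^ 2 * v q ^ 2)) p
        + ∑ k, pdx k (fun q =>
          (∑ j, divCoeff e a k j (q.2 e) * (2 * cutoff R q ^ 2 * v q * pdx j v q))
            - weight e a (q.2 e) * (2 * cutoff R q ^ 2 * v q * F k q)) p := by
  have hpointwise := h.caccioppoli_pointwise (e := e) (p.2 e) (v := v p)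
    (θ := fun j => cutoff R p * pdx j v p) (F := fun k => F k p)
    (abs_cutoff_le hR hp) (abs_pdt_cutoff_le hR hp) (abs_pdx_cutoff_le hR hp)
  rw [h.pdt_add_sum_pdx_energyFlux_sub hv (by fun_prop) hF hFe hL]
  simp (disch := fun_prop (disch := simp)) only [pdx_sq, pdt_sq]
  convert hpointwise using 1
  · simp only [mul_pow, mul_sum]
  · simp only [add_mul, sum_add_distrib, mul_sum, sum_mul, mul_add]
    ring_nf

lemma caccioppoliConst_nonneg (hδ : 0 ≤ δ) (M : ℝ) : 0 ≤ caccioppoliConst d δ M := by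
  rw [caccioppoliConst]
  positivity

lemma UniformlyElliptic.setIntegral_cutoff_sq_mul_grad_le (h : UniformlyElliptic δ a)
    (hR : 0 ≤ R) {v : SpaceTime d → ℝ} (hv : ContDiff ℝ ∞ v) {F : Fin d → SpaceTime d → ℝ}
    (hF : ∀ k, ContDiff ℝ ∞ (F k)) (hFe : F e = 0)
    (hL : ∀ p ∈ Qc d R, parabolicOp e a v p = ∑ k, pdx k (F k) p) :
    δ ^ 2 * ∫ p in Qc d R, cutoff R p ^ 2 * ∑ j, pdx j v p ^ 2
      ≤ caccioppoliConst d δ (cutoffBound R) * ∫ p in Qc d R, (v p ^ 2 + ∑ k, F k p ^ 2) := by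
  have hρ := h.contDiff_weight e
  have hB := h.contDiff_divCoeff e
  rw [← integral_const_mul, ← integral_const_mul]
  refine setIntegral_le_of_sub_le_divergence
    (G := fun q => weight e a (q.2 e) * (cutoff R q ^ 2 * v q ^ 2))
    (H := fun k q => (∑ j, divCoeff e a k j (q.2 e) * (2 * cutoff R q ^ 2 * v q * pdx j v q))
      - weight e a (q.2 e) * (2 * cutoff R q ^ 2 * v q * F k q))
    (ContDiff.of_le (n := ∞) (by fun_prop) (by simp))
    (fun k => ContDiff.of_le (n := ∞) (by fun_prop) (by simp))
    (fun x _ => by simp [cutoff_top]) (fun x _ => ?_)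
    (fun k t _ x hx => by simp [cutoff_of_mem_sphereE t hx]) (by fun_prop) (by fun_prop)
    fun p hp => ?_
  · have := h.weight_pos e (x e)
    positivity
  · exact h.caccioppoli_le_divergence hR hv hF hFe hp (hL p hp)

lemma exists_setIntegral_grad_le (d : ℕ) (hδ : 0 < δ) (hr : 0 ≤ r) (hrR : r < R) :
    ∃ N, 0 ≤ N ∧ ∀ (e : Fin d) (a : ℝ → Fin d → Fin d → ℝ), UniformlyElliptic δ a →
      ∀ v : SpaceTime d → ℝ, ContDiff ℝ ∞ v →
      ∀ F : Fin d → SpaceTime d → ℝ, (∀ k, ContDiff ℝ ∞ (F k)) → F e = 0 →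
      (∀ p ∈ Qc d R, parabolicOp e a v p = ∑ k, pdx k (F k) p) →
      ∫ p in Qc d r, ∑ j, pdx j v p ^ 2
        ≤ N * ∫ p in Qc d R, (v p ^ 2 + ∑ k, F k p ^ 2) := by
  have hgap := sq_sub_sq_pos_of_lt hr hrR
  set C := caccioppoliConst d δ (cutoffBound R)
  have hC0 : 0 ≤ C := caccioppoliConst_nonneg hδ.le _
  refine ⟨((R ^ 2 - r ^ 2) ^ 4)⁻¹ * (δ⁻¹ ^ 2 * C), by positivity, fun e a h v hv F hF hFe hL => ?_⟩
  calc ∫ p in Qc d r, ∑ j, pdx j v p ^ 2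
      ≤ ((R ^ 2 - r ^ 2) ^ 4)⁻¹ * ∫ p in Qc d R, cutoff R p ^ 2 * ∑ j, pdx j v p ^ 2 :=
        setIntegral_Qc_le_cutoff hr hrR (by fun_prop) fun p => sum_nonneg fun _ _ => sq_nonneg _
    _ = ((R ^ 2 - r ^ 2) ^ 4)⁻¹
          * (δ⁻¹ ^ 2 * (δ ^ 2 * ∫ p in Qc d R, cutoff R p ^ 2 * ∑ j, pdx j v p ^ 2)) := by
        field_simp
    _ ≤ ((R ^ 2 - r ^ 2) ^ 4)⁻¹ * (δ⁻¹ ^ 2 * (C * ∫ p in Qc d R, (v p ^ 2 + ∑ k, F k p ^ 2))) := by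
        gcongr _ * (_ * ?_)
        exact h.setIntegral_cutoff_sq_mul_grad_le (hr.trans hrR.le) hv hF hFe hL
    _ = _ := by ring

end Caccioppoli

section TimeDerivative

variable {d : ℕ} {δ r R : ℝ} {e : Fin d} {a : ℝ → Fin d → Fin d → ℝ} {v : SpaceTime d → ℝ}

/-- The squared norm of all second space derivatives except the one in direction `x^e` only. -/
noncomputable def tangentialHessianSq (e : Fin d) (v : SpaceTime d → ℝ) (p : SpaceTime d) : ℝ :=
  ∑ k ∈ univ.erase e, ∑ j, pdx j (pdx k v) p ^ 2

@[fun_prop]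
lemma continuous_tangentialHessianSq (hv : ContDiff ℝ ∞ v) :
    Continuous (tangentialHessianSq e v) := by
  unfold tangentialHessianSq
  fun_prop

lemma tangentialHessianSq_nonneg (p : SpaceTime d) : 0 ≤ tangentialHessianSq e v p :=
  sum_nonneg fun _ _ => sum_nonneg fun _ _ => sq_nonneg _

/-- A constant bounding the square of `∑ b^{kj} ∂_k ∂_j v`, `k ≠ e`, by `tangentialHessianSq`. -/
noncomputable def hessianConst (d : ℕ) (δ : ℝ) : ℝ := d ^ 2 * (2 * δ⁻¹ ^ 2) ^ 2

lemma hessianConst_nonneg (d : ℕ) (δ : ℝ) : 0 ≤ hessianConst d δ := by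
  unfold hessianConst
  positivity

/-- The constant in the pointwise form of the estimate of `v_t` when the cutoff function and its
first derivatives are bounded by `M`. -/
noncomputable def timeEnergyConst (d : ℕ) (δ M : ℝ) : ℝ :=
  3 * δ⁻¹ * M ^ 2 * (δ⁻¹ ^ 2 + hessianConst d δ + 4) + 2 * M ^ 2

lemma neg_sq_add_le_mul_add {η M z zt ze τ f Y ve : ℝ} (hη : 0 < η) (hz : |z| ≤ M)
    (hzt : |zt| ≤ M) (hze : |ze| ≤ M) :
    -(η * τ ^ 2 + 3 * η⁻¹ * M ^ 2 * (f ^ 2 + Y ^ 2 + 4 * ve ^ 2) + 2 * M ^ 2 * ve ^ 2)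
      ≤ 2 * z * zt * ve ^ 2 + 2 * τ * (-(z * f) + z * Y - 2 * ze * ve) := by
  have hsq {x : ℝ} (hx : |x| ≤ M) : x ^ 2 ≤ M ^ 2 := sq_le_sq' (neg_le_of_abs_le hx)
    (le_of_abs_le hx)
  have hyoung := neg_sq_add_sq_le_two_mul hη τ (-(z * f) + z * Y - 2 * ze * ve)
  have hcross : (-(z * f) + z * Y - 2 * ze * ve) ^ 2
      ≤ 3 * M ^ 2 * (f ^ 2 + Y ^ 2 + 4 * ve ^ 2) := by
    have hf := mul_le_mul_of_nonneg_right (hsq hz) (sq_nonneg f)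
    have hY := mul_le_mul_of_nonneg_right (hsq hz) (sq_nonneg Y)
    have hve := mul_le_mul_of_nonneg_right (hsq hze) (sq_nonneg ve)
    nlinarith [sq_nonneg (z * f + z * Y), sq_nonneg (z * f - 2 * ze * ve),
      sq_nonneg (z * Y + 2 * ze * ve)]
  have htime : -(2 * M ^ 2 * ve ^ 2) ≤ 2 * z * zt * ve ^ 2 := by
    have hzzt : |z * zt| ≤ M * M := by
      rw [abs_mul]
      exact mul_le_mul hz hzt (abs_nonneg zt) ((abs_nonneg z).trans hz)
    have := mul_le_mul_of_nonneg_right (neg_le_of_abs_le hzzt) (sq_nonneg ve)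
    linarith
  have := mul_le_mul_of_nonneg_left hcross (inv_pos.2 hη).le
  linarith

namespace UniformlyElliptic

variable (h : UniformlyElliptic δ a)
include h

lemma sq_sum_divCoeff_mul_le (hv : ContDiff ℝ ∞ v) (p : SpaceTime d) :
    (∑ k ∈ univ.erase e, ∑ j, divCoeff e a k j (p.2 e) * pdx k (pdx j v) p) ^ 2
      ≤ hessianConst d δ * tangentialHessianSq e v p := by
  have hcard : (#(univ.erase e ×ˢ univ : Finset (Fin d × Fin d)) : ℝ) ≤ d ^ 2 := by
    rw [sq]
    exact_mod_cast (card_le_univ _).trans_eq (by simp)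
  rw [hessianConst, tangentialHessianSq]
  simp only [fun k j => pdx_comm hv k j]
  rw [← sum_product', ← sum_product']
  refine (sq_sum_mul_le fun i _ => h.abs_divCoeff_le e i.1 i.2 (p.2 e)).trans ?_
  gcongr

lemma sq_weight_mul_le (s x : ℝ) : (weight e a s * x) ^ 2 ≤ δ⁻¹ ^ 2 * x ^ 2 := by
  rw [mul_pow]
  exact mul_le_mul_of_nonneg_right
    (pow_le_pow_left₀ (h.weight_pos e s).le (h.weight_le e s) 2) (sq_nonneg x)

lemma sq_pdx_pdx_self_le (hv : ContDiff ℝ ∞ v) (p : SpaceTime d) :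
    pdx e (pdx e v) p ^ 2 ≤ 3 * (δ⁻¹ ^ 2 + hessianConst d δ)
      * (parabolicOp e a v p ^ 2 + pdt v p ^ 2 + tangentialHessianSq e v p) := by
  rw [h.pdx_pdx_self_eq e hv p]
  have hL := h.sq_weight_mul_le (e := e) (p.2 e) (parabolicOp e a v p)
  have ht := h.sq_weight_mul_le (e := e) (p.2 e) (pdt v p)
  have hY := h.sq_sum_divCoeff_mul_le (e := e) hv p
  set Y := ∑ k ∈ univ.erase e, ∑ j, divCoeff e a k j (p.2 e) * pdx k (pdx j v) p
  have hT : 0 ≤ δ⁻¹ ^ 2 * tangentialHessianSq e v p :=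
    mul_nonneg (by positivity) (tangentialHessianSq_nonneg p)
  have hrest : 0 ≤ hessianConst d δ * (parabolicOp e a v p ^ 2 + pdt v p ^ 2) :=
    mul_nonneg (hessianConst_nonneg d δ) (by positivity)
  set x := weight e a (p.2 e) * parabolicOp e a v p
  set y := weight e a (p.2 e) * pdt v p
  have hthree : (x - y - Y) ^ 2 ≤ 3 * (x ^ 2 + y ^ 2 + Y ^ 2) := by
    nlinarith [sq_nonneg (x + y), sq_nonneg (x + Y), sq_nonneg (y - Y)]
  rw [mul_sub]
  linarith

lemma pdt_add_pdx_timeFlux {ζ : SpaceTime d → ℝ} (hζ : ContDiff ℝ ∞ ζ) (hv : ContDiff ℝ ∞ v)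
    (p : SpaceTime d) :
    pdt (fun q => ζ q ^ 2 * pdx e v q ^ 2) p + pdx e (fun q => -2 * ζ q ^ 2 * pdt v q * pdx e v q) p
      = 2 * weight e a (p.2 e) * (ζ p * pdt v p) ^ 2 + 2 * ζ p * pdt ζ p * pdx e v p ^ 2
        + 2 * (ζ p * pdt v p) * (-(ζ p * (weight e a (p.2 e) * parabolicOp e a v p)) + ζ p *
          (∑ k ∈ univ.erase e, ∑ j, divCoeff e a k j (p.2 e) * pdx k (pdx j v) p)
          - 2 * pdx e ζ p * pdx e v p) := by
  have hconst : pdx e (fun _ => (-2 : ℝ)) p = 0 := dirDeriv_const (-2)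
  simp (disch := fun_prop (disch := simp)) only [pdx_mul, pdt_mul, pdt_sq, pdx_sq, hconst,
    ← pdx_pdt_comm hv e, h.pdx_pdx_self_eq e hv p]
  ring

lemma timeEnergy_le_divergence (hR : 0 ≤ R) (hv : ContDiff ℝ ∞ v) {p : SpaceTime d}
    (hp : p ∈ Qc d R) :
    δ * (cutoff R p ^ 2 * pdt v p ^ 2) - timeEnergyConst d δ (cutoffBound R)
        * (pdx e v p ^ 2 + tangentialHessianSq e v p + parabolicOp e a v p ^ 2)
      ≤ pdt (fun q => cutoff R q ^ 2 * pdx e v q ^ 2) p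
        + pdx e (fun q => -2 * cutoff R q ^ 2 * pdt v q * pdx e v q) p := by
  have hδ := h.pos
  have hT := tangentialHessianSq_nonneg (e := e) (v := v) p
  have hH := hessianConst_nonneg d δ
  have hY := h.sq_sum_divCoeff_mul_le (e := e) hv p
  have hL := h.sq_weight_mul_le (e := e) (p.2 e) (parabolicOp e a v p)
  have hρ := mul_le_mul_of_nonneg_right (h.le_weight e (p.2 e)) (sq_nonneg (cutoff R p * pdt v p))
  have hpointwise := neg_sq_add_le_mul_add (τ := cutoff R p * pdt v p) (ve := pdx e v p)
    (f := weight e a (p.2 e) * parabolicOp e a v p)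
    (Y := ∑ k ∈ univ.erase e, ∑ j, divCoeff e a k j (p.2 e) * pdx k (pdx j v) p)
    hδ (abs_cutoff_le hR hp) (abs_pdt_cutoff_le hR hp) (abs_pdx_cutoff_le hR hp e)
  have hsource : (weight e a (p.2 e) * parabolicOp e a v p) ^ 2
      + (∑ k ∈ univ.erase e, ∑ j, divCoeff e a k j (p.2 e) * pdx k (pdx j v) p) ^ 2
      + 4 * pdx e v p ^ 2
      ≤ (δ⁻¹ ^ 2 + hessianConst d δ + 4)
        * (pdx e v p ^ 2 + tangentialHessianSq e v p + parabolicOp e a v p ^ 2) := by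
    have : 0 ≤ (δ⁻¹ ^ 2 + hessianConst d δ) * pdx e v p ^ 2
      + (δ⁻¹ ^ 2 + 4) * tangentialHessianSq e v p
      + (hessianConst d δ + 4) * parabolicOp e a v p ^ 2 := by positivity
    linarith
  have hscaled := mul_le_mul_of_nonneg_left hsource
    (by positivity : 0 ≤ 3 * δ⁻¹ * cutoffBound R ^ 2)
  have hrest : 0 ≤ 2 * cutoffBound R ^ 2
      * (tangentialHessianSq e v p + parabolicOp e a v p ^ 2) := by positivity
  rw [h.pdt_add_pdx_timeFlux (contDiff_cutoff R) hv p, timeEnergyConst]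
  linarith

end UniformlyElliptic

lemma setIntegral_le_of_sub_le_pdt_add_pdx {k : Fin d} {G H : SpaceTime d → ℝ}
    (hG : ContDiff ℝ 1 G) (hH : ContDiff ℝ 1 H)
    (htop : ∀ x ∈ ballE d R, G (R ^ 2, x) = 0) (hbot : ∀ x ∈ ballE d R, 0 ≤ G (0, x))
    (hlat : ∀ t ∈ Set.Ioo 0 (R ^ 2), ∀ x ∈ sphereE d R, H (t, x) = 0)
    {A B : SpaceTime d → ℝ} (hA : Continuous A) (hB : Continuous B)
    (hle : ∀ p ∈ Qc d R, A p - B p ≤ pdt G p + pdx k H p) :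
    ∫ p in Qc d R, A p ≤ ∫ p in Qc d R, B p := by
  refine setIntegral_le_of_sub_le_divergence (H := Pi.single k H) hG (fun i => ?_) htop hbot
    (fun i t ht x hx => ?_) hA hB fun p hp => (hle p hp).trans_eq ?_
  · obtain rfl | hi := eq_or_ne i k
    · rwa [Pi.single_eq_same]
    · rw [Pi.single_eq_of_ne hi]
      exact contDiff_const
  · obtain rfl | hi := eq_or_ne i k
    · rw [Pi.single_eq_same, hlat t ht x hx]
    · rw [Pi.single_eq_of_ne hi, Pi.zero_apply]
  · rw [Fintype.sum_eq_single k fun i hi => by simp [Pi.single_eq_of_ne hi, pdx],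
      Pi.single_eq_same]

lemma exists_setIntegral_pdt_sq_le (d : ℕ) (hδ : 0 < δ) (hr : 0 ≤ r) (hrR : r < R) :
    ∃ N, 0 ≤ N ∧ ∀ (e : Fin d) (a : ℝ → Fin d → Fin d → ℝ), UniformlyElliptic δ a →
      ∀ v : SpaceTime d → ℝ, ContDiff ℝ ∞ v →
      ∫ p in Qc d r, pdt v p ^ 2 ≤ N * ∫ p in Qc d R,
        (pdx e v p ^ 2 + tangentialHessianSq e v p + parabolicOp e a v p ^ 2) := by
  have hR : 0 ≤ R := hr.trans hrR.le
  have hgap := sq_sub_sq_pos_of_lt hr hrR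
  have hH := hessianConst_nonneg d δ
  set C := timeEnergyConst d δ (cutoffBound R) with hC
  have hC0 : 0 ≤ C := by
    rw [hC, timeEnergyConst]
    positivity
  refine ⟨((R ^ 2 - r ^ 2) ^ 4)⁻¹ * (δ⁻¹ * C), by positivity, fun e a h v hv => ?_⟩
  have hL := (h.contDiff_parabolicOp e hv).continuous
  have henergy : ∫ p in Qc d R, δ * (cutoff R p ^ 2 * pdt v p ^ 2)
      ≤ ∫ p in Qc d R,
        C * (pdx e v p ^ 2 + tangentialHessianSq e v p + parabolicOp e a v p ^ 2) := by
    exact setIntegral_le_of_sub_le_pdt_add_pdx (k := e)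
      (G := fun q => cutoff R q ^ 2 * pdx e v q ^ 2)
      (H := fun q => -2 * cutoff R q ^ 2 * pdt v q * pdx e v q)
      (ContDiff.of_le (n := ∞) (by fun_prop) (by simp))
      (ContDiff.of_le (n := ∞) (by fun_prop) (by simp))
      (fun x _ => by simp [cutoff_top]) (fun x _ => by positivity)
      (fun t _ x hx => by simp [cutoff_of_mem_sphereE t hx]) (by fun_prop) (by fun_prop)
      fun p hp => h.timeEnergy_le_divergence hR hv hp
  rw [integral_const_mul, integral_const_mul] at henergy
  calc ∫ p in Qc d r, pdt v p ^ 2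
      ≤ ((R ^ 2 - r ^ 2) ^ 4)⁻¹ * ∫ p in Qc d R, cutoff R p ^ 2 * pdt v p ^ 2 :=
        setIntegral_Qc_le_cutoff hr hrR (by fun_prop) fun p => sq_nonneg _
    _ = ((R ^ 2 - r ^ 2) ^ 4)⁻¹
          * (δ⁻¹ * (δ * ∫ p in Qc d R, cutoff R p ^ 2 * pdt v p ^ 2)) := by
        field_simp
    _ ≤ ((R ^ 2 - r ^ 2) ^ 4)⁻¹ * (δ⁻¹ * (C * _)) := by gcongr
    _ = _ := by ring

end TimeDerivative

/-! ### An anisotropic Sobolev inequality -/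

section Sobolev

lemma sq_le_sq_add_setIntegral {φ φ' : ℝ → ℝ} (hφ : ∀ y, HasDerivAt φ (φ' y) y)
    (hφ' : Continuous φ') {a b s y : ℝ} (hs : s ∈ Set.Icc a b) (hy : y ∈ Set.Icc a b) :
    φ s ^ 2 ≤ φ y ^ 2 + ∫ z in Set.Icc a b, (φ z ^ 2 + φ' z ^ 2) := by
  have hφc : Continuous φ := continuous_iff_continuousAt.2 fun y => (hφ y).continuousAt
  have hint : IntegrableOn (fun z => φ z ^ 2 + φ' z ^ 2) (Set.Icc a b) :=
    Continuous.integrableOn_Icc (by fun_prop)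
  have hsub : Set.uIoc y s ⊆ Set.Icc a b :=
    Set.uIoc_subset_uIcc.trans (Set.uIcc_subset_Icc hy hs)
  have hftc : ∫ z in y..s, 2 * φ z * φ' z = φ s ^ 2 - φ y ^ 2 :=
    intervalIntegral.integral_eq_sub_of_hasDerivAt (f := fun z => φ z ^ 2)
      (fun z _ => by simpa using (hφ z).fun_pow 2)
      (Continuous.intervalIntegrable (by fun_prop) _ _)
  rw [← sub_le_iff_le_add', ← hftc]
  calc ∫ z in y..s, 2 * φ z * φ' z
      ≤ ∫ z in Set.uIoc y s, ‖2 * φ z * φ' z‖ :=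
        (Real.le_norm_self _).trans intervalIntegral.norm_integral_le_integral_norm_uIoc
    _ ≤ ∫ z in Set.uIoc y s, (φ z ^ 2 + φ' z ^ 2) := by
        refine setIntegral_mono_on ?_ (hint.mono_set hsub) measurableSet_uIoc fun z _ => ?_
        · exact (Continuous.integrableOn_Icc (by fun_prop)).mono_set hsub
        · rw [Real.norm_eq_abs, abs_le]
          constructor <;> nlinarith [sq_nonneg (φ z - φ' z), sq_nonneg (φ z + φ' z)]
    _ ≤ ∫ z in Set.Icc a b, (φ z ^ 2 + φ' z ^ 2) :=
        setIntegral_mono_set hint (.of_forall fun z => by positivity) hsub.eventuallyLE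

lemma sq_le_mul_setIntegral {φ φ' : ℝ → ℝ} (hφ : ∀ y, HasDerivAt φ (φ' y) y)
    (hφ' : Continuous φ') {c ε s : ℝ} (hε : 0 < ε) (hs : s ∈ Set.Icc c (c + ε)) :
    φ s ^ 2 ≤ (1 / ε + 1) * ∫ y in Set.Icc c (c + ε), (φ y ^ 2 + φ' y ^ 2) := by
  have hφc : Continuous φ := continuous_iff_continuousAt.2 fun y => (hφ y).continuousAt
  set I := ∫ y in Set.Icc c (c + ε), (φ y ^ 2 + φ' y ^ 2)
  have hsq : IntegrableOn (fun y => φ y ^ 2) (Set.Icc c (c + ε)) :=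
    Continuous.integrableOn_Icc (by fun_prop)
  have hmean : ε * φ s ^ 2 ≤ I + ε * I := by
    calc ε * φ s ^ 2
        = ∫ _y in Set.Icc c (c + ε), φ s ^ 2 := by simp [hε.le]
      _ ≤ ∫ y in Set.Icc c (c + ε), (φ y ^ 2 + I) :=
          setIntegral_mono_on (by simp) (hsq.add (by simp)) measurableSet_Icc
            fun y hy => sq_le_sq_add_setIntegral hφ hφ' hs hy
      _ = (∫ y in Set.Icc c (c + ε), φ y ^ 2) + ε * I := by
          rw [integral_add hsq (by simp)]
          simp [hε.le]
      _ ≤ I + ε * I := by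
          gcongr ?_ + _
          exact setIntegral_mono_on hsq (Continuous.integrableOn_Icc (by fun_prop))
            measurableSet_Icc fun y _ => le_add_of_nonneg_right (sq_nonneg _)
  calc φ s ^ 2 = 1 / ε * (ε * φ s ^ 2) := by field_simp
    _ ≤ 1 / ε * (I + ε * I) := by gcongr
    _ = (1 / ε + 1) * I := by field_simp

lemma ofReal_sq_le_mul_setLIntegral {φ φ' : ℝ → ℝ} (hφ : ∀ y, HasDerivAt φ (φ' y) y)
    (hφ' : Continuous φ') {c ε s : ℝ} (hε : 0 < ε) (hs : s ∈ Set.Icc c (c + ε)) :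
    ENNReal.ofReal (φ s ^ 2) ≤ ENNReal.ofReal (1 / ε + 1) *
      ∫⁻ y in Set.Icc c (c + ε), (ENNReal.ofReal (φ y ^ 2) + ENNReal.ofReal (φ' y ^ 2)) := by
  have hφc : Continuous φ := continuous_iff_continuousAt.2 fun y => (hφ y).continuousAt
  have hint : IntegrableOn (fun z => φ z ^ 2 + φ' z ^ 2) (Set.Icc c (c + ε)) :=
    Continuous.integrableOn_Icc (by fun_prop)
  simp_rw [← ENNReal.ofReal_add (sq_nonneg (φ _)) (sq_nonneg (φ' _))]
  rw [← ofReal_integral_eq_lintegral_ofReal hint (.of_forall fun z => by positivity),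
    ← ENNReal.ofReal_mul (by positivity)]
  exact ENNReal.ofReal_le_ofReal (sq_le_mul_setIntegral hφ hφ' hε hs)

variable {E : Type*} [NormedAddCommGroup E] [NormedSpace ℝ E]

/-- The sum of the squares of the iterated derivatives of `g` along all sublists of a list of
directions: the integrand of the anisotropic Sobolev norm with dominating mixed derivatives. -/
noncomputable def mixedDensity : List E → (E → ℝ) → E → ℝ
  | [], g => fun p => g p ^ 2
  | ξ :: l, g => fun p => mixedDensity l g p + mixedDensity l (dirDeriv ξ g) p

lemma mixedDensity_nonneg (l : List E) (g : E → ℝ) (p : E) : 0 ≤ mixedDensity l g p := by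
  induction l generalizing g with
  | nil => exact sq_nonneg _
  | cons ξ l ih => exact add_nonneg (ih g) (ih _)

lemma continuous_mixedDensity (l : List E) {g : E → ℝ} (hg : ContDiff ℝ ∞ g) :
    Continuous (mixedDensity l g) := by
  induction l generalizing g with
  | nil => exact hg.continuous.pow 2
  | cons ξ l ih => exact (ih hg).add (ih (contDiff_dirDeriv hg))

lemma measurable_ofReal_mixedDensity [MeasurableSpace E] [BorelSpace E] (l : List E) {g : E → ℝ}
    (hg : ContDiff ℝ ∞ g) : Measurable fun p => ENNReal.ofReal (mixedDensity l g p) :=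
  (continuous_mixedDensity l hg).measurable.ennreal_ofReal

lemma ofReal_mixedDensity_cons (ξ : E) (l : List E) (g : E → ℝ) (p : E) :
    ENNReal.ofReal (mixedDensity (ξ :: l) g p) =
      ENNReal.ofReal (mixedDensity l g p) + ENNReal.ofReal (mixedDensity l (dirDeriv ξ g) p) :=
  ENNReal.ofReal_add (mixedDensity_nonneg ..) (mixedDensity_nonneg ..)

lemma mixedDensity_slice {F : Type*} [NormedAddCommGroup F] [NormedSpace ℝ F] {g : E × F → ℝ}
    (hg : ContDiff ℝ ∞ g) (l : List F) (t : E) (y : F) :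
    mixedDensity l (fun x => g (t, x)) y = mixedDensity (l.map fun η => (0, η)) g (t, y) := by
  induction l generalizing g with
  | nil => rfl
  | cons η l ih =>
    have hslice := dirDeriv_slice (hg.differentiable (by simp)) t η
    simp only [List.map_cons, mixedDensity, hslice, ih hg, ih (contDiff_dirDeriv hg)]

/-- The restrictions of Lebesgue measure to the sides of the cube with corner `c` and side `ε`. -/
noncomputable abbrev cubeMeasure {ι : Type*} (c : ι → ℝ) (ε : ℝ) (i : ι) : Measure ℝ :=
  volume.restrict (Set.Icc (c i) (c i + ε))

lemma ofReal_sq_le_mul_lmarginal {ι : Type*} [Fintype ι] [DecidableEq ι] {c : ι → ℝ} {ε : ℝ}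
    (hε : 0 < ε) {l : List ι} (hl : l.Nodup) {g : (ι → ℝ) → ℝ} (hg : ContDiff ℝ ∞ g) {x : ι → ℝ}
    (hx : ∀ i, x i ∈ Set.Icc (c i) (c i + ε)) :
    ENNReal.ofReal (g x ^ 2) ≤ ENNReal.ofReal (1 / ε + 1) ^ l.length *
      lmarginal (cubeMeasure c ε) l.toFinset
        (fun y => ENNReal.ofReal (mixedDensity (l.map fun i => Pi.single i 1) g y)) x := by
  induction l generalizing g x with
  | nil => simp [mixedDensity]
  | cons i l ih =>
    obtain ⟨hi, hl⟩ := List.nodup_cons.1 hl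
    have hg' : ContDiff ℝ ∞ (dirDeriv (Pi.single i 1) g) := contDiff_dirDeriv hg
    have hone := ofReal_sq_le_mul_setLIntegral (φ := fun y => g (Function.update x i y))
      (fun y => (hg.differentiable (by simp) _).hasFDerivAt.comp_hasDerivAt y
        (hasDerivAt_update x i y))
      (hg'.continuous.comp (by fun_prop)) hε (hx i)
    rw [Function.update_eq_self] at hone
    refine hone.trans ?_
    rw [List.length_cons, pow_succ', mul_assoc, List.toFinset_cons, lmarginal_insert _
      (measurable_ofReal_mixedDensity _ hg) (List.mem_toFinset.not.2 hi),
      ← lintegral_const_mul' _ _ (ENNReal.pow_ne_top ENNReal.ofReal_ne_top)]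
    refine mul_le_mul_right (setLIntegral_mono' measurableSet_Icc fun y hy => ?_) _
    have hupd (j : ι) : Function.update x i y j ∈ Set.Icc (c j) (c j + ε) := by
      obtain rfl | hj := eq_or_ne j i
      · simpa using hy
      · simpa [Function.update_of_ne hj] using hx j
    refine (add_le_add (ih hl hg hupd) (ih hl hg' hupd)).trans_eq ?_
    simp only [← mul_add, List.map_cons, ofReal_mixedDensity_cons]
    congr 1
    exact (lintegral_add_left ((measurable_ofReal_mixedDensity _ hg).comp
      measurable_updateFinset) _).symm

lemma ofReal_sq_le_mul_lintegral_cube {ι : Type*} [Fintype ι] [DecidableEq ι] {c : ι → ℝ} {ε : ℝ}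
    (hε : 0 < ε) {l : List ι} (hl : l.Nodup) (hmem : ∀ i, i ∈ l) {g : (ι → ℝ) → ℝ}
    (hg : ContDiff ℝ ∞ g) :
    ENNReal.ofReal (g c ^ 2) ≤ ENNReal.ofReal (1 / ε + 1) ^ l.length *
      ∫⁻ y in Set.univ.pi fun i => Set.Icc (c i) (c i + ε),
        ENNReal.ofReal (mixedDensity (l.map fun i => Pi.single i 1) g y) := by
  have hbox := ofReal_sq_le_mul_lmarginal hε hl hg (c := c) (x := c)
    fun i => ⟨le_rfl, by linarith⟩
  rwa [eq_univ_of_forall fun i => List.mem_toFinset.2 (hmem i), lmarginal_univ,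
    ← Measure.restrict_pi_pi] at hbox

variable {d : ℕ}

/-- The unit vector `∂_{x^i}` of `ℝ^{d+1}`. -/
abbrev spaceDir (i : Fin d) : SpaceTime d := (0, Pi.single i 1)

/-- The unit vector `∂_t` of `ℝ^{d+1}`. -/
abbrev timeDir (d : ℕ) : SpaceTime d := (1, 0)

lemma ofReal_sq_le_mul_lintegral_box {l : List (Fin d)} (hl : l.Nodup) (hmem : ∀ i, i ∈ l)
    {g : SpaceTime d → ℝ} (hg : ContDiff ℝ ∞ g) {ε : ℝ} (hε : 0 < ε) (p : SpaceTime d) :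
    ENNReal.ofReal (g p ^ 2) ≤ ENNReal.ofReal (1 / ε + 1) ^ (l.length + 1) *
      ∫⁻ q in Set.Icc p.1 (p.1 + ε) ×ˢ Set.univ.pi fun i => Set.Icc (p.2 i) (p.2 i + ε),
        ENNReal.ofReal (mixedDensity (timeDir d :: l.map spaceDir) g q) := by
  have hslice {f : SpaceTime d → ℝ} (hf : ContDiff ℝ ∞ f) (t : ℝ) :
      ENNReal.ofReal (f (t, p.2) ^ 2) ≤ ENNReal.ofReal (1 / ε + 1) ^ l.length *
        ∫⁻ y in Set.univ.pi fun i => Set.Icc (p.2 i) (p.2 i + ε),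
          ENNReal.ofReal (mixedDensity (l.map spaceDir) f (t, y)) := by
    have hcube := ofReal_sq_le_mul_lintegral_cube (c := p.2) hε hl hmem (g := fun x => f (t, x))
      (by fun_prop)
    simp only [mixedDensity_slice hf, List.map_map] at hcube
    exact hcube
  have htime := ofReal_sq_le_mul_setLIntegral (c := p.1) (φ := fun t => g (t, p.2))
    (fun t => hasDerivAt_pdt (hg.differentiable (by simp)))
    ((contDiff_pdt hg).continuous.comp (by fun_prop)) hε ⟨le_rfl, by linarith⟩
  refine htime.trans ?_
  rw [pow_succ', mul_assoc, Measure.volume_eq_prod, ← Measure.prod_restrict,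
    lintegral_prod _ (measurable_ofReal_mixedDensity _ hg).aemeasurable,
    ← lintegral_const_mul' _ _ (ENNReal.pow_ne_top ENNReal.ofReal_ne_top)]
  refine mul_le_mul_right (lintegral_mono fun t => ?_) _
  refine (add_le_add (hslice hg t) (hslice (contDiff_pdt hg) t)).trans_eq ?_
  simp only [← mul_add, ofReal_mixedDensity_cons]
  congr 1
  exact (lintegral_add_left ((measurable_ofReal_mixedDensity _ hg).comp
    (by fun_prop)) _).symm

lemma exists_box_subset_Qc (d : ℕ) {r R : ℝ} (hr : 0 ≤ r) (hrR : r < R) :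
    ∃ ε > 0, ∀ p ∈ Qc d r,
      Set.Icc p.1 (p.1 + ε) ×ˢ Set.univ.pi (fun i => Set.Icc (p.2 i) (p.2 i + ε)) ⊆ Qc d R := by
  have hgap : 0 < R ^ 2 - r ^ 2 := by nlinarith
  set ε := min 1 ((R ^ 2 - r ^ 2) / ((d + 1) * (2 * r + 1)))
  have hε : 0 < ε := by positivity
  have hε1 : ε ≤ 1 := min_le_left _ _
  have hεgap : (d + 1) * (2 * r + 1) * ε ≤ R ^ 2 - r ^ 2 :=
    (le_div_iff₀' (by positivity)).1 (min_le_right _ _)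
  refine ⟨ε, hε, ?_⟩
  rintro ⟨t, x⟩ ⟨ht, hx⟩ ⟨s, y⟩ ⟨hs, hy⟩
  have hcoord (i : Fin d) : y i ^ 2 ≤ x i ^ 2 + (2 * r + 1) * ε := by
    have hyi := hy i (Set.mem_univ i)
    have hxi := abs_le.1 (abs_le_of_mem_ballE hx i)
    rw [abs_of_nonneg hr] at hxi
    nlinarith [hyi.1, hyi.2]
  have hball : ∑ i, y i ^ 2 ≤ ∑ i, x i ^ 2 + d * ((2 * r + 1) * ε) := by
    simpa [sum_add_distrib] using sum_le_sum fun i (_ : i ∈ univ) => hcoord i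
  have hrε : 0 ≤ r * ε := by positivity
  have hdε : 0 ≤ d * ((2 * r + 1) * ε) := by positivity
  have hx' : ∑ i, x i ^ 2 < r ^ 2 := hx
  refine ⟨⟨ht.1.trans_le hs.1, ?_⟩, ?_⟩
  · linarith [hs.2, ht.2]
  · change ∑ i, y i ^ 2 < R ^ 2
    linarith

lemma exists_sq_le_mul_setIntegral_mixedDensity {r R : ℝ} (hr : 0 ≤ r) (hrR : r < R)
    {l : List (Fin d)} (hl : l.Nodup) (hmem : ∀ i, i ∈ l) :
    ∃ C, 0 ≤ C ∧ ∀ g : SpaceTime d → ℝ, ContDiff ℝ ∞ g → ∀ p ∈ Qc d r,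
      g p ^ 2 ≤ C * ∫ q in Qc d R, mixedDensity (timeDir d :: l.map spaceDir) g q := by
  obtain ⟨ε, hε, hsub⟩ := exists_box_subset_Qc d hr hrR
  refine ⟨(1 / ε + 1) ^ (l.length + 1), by positivity, fun g hg p hp => ?_⟩
  have hbox := (ofReal_sq_le_mul_lintegral_box hl hmem hg hε p).trans
    (mul_le_mul_right (lintegral_mono_set (hsub p hp)) _)
  rw [← ofReal_integral_eq_lintegral_ofReal (integrableOn_Qc (continuous_mixedDensity _ hg) R)
    (.of_forall fun q => mixedDensity_nonneg _ _ q), ← ENNReal.ofReal_pow (by positivity),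
    ← ENNReal.ofReal_mul (by positivity)] at hbox
  exact (ENNReal.ofReal_le_ofReal_iff (mul_nonneg (by positivity)
    (integral_nonneg fun q => mixedDensity_nonneg _ _ q))).1 hbox

end Sobolev

/-! ### Interior estimates for solutions -/

section Interior

variable {d : ℕ} {δ R : ℝ} {e : Fin d} {a : ℝ → Fin d → Fin d → ℝ} {v : SpaceTime d → ℝ}

lemma UniformlyElliptic.parabolicOp_dirDeriv (h : UniformlyElliptic δ a) {ξ : SpaceTime d}
    (hξ : ξ.2 e = 0) (hv : ContDiff ℝ ∞ v) (p : SpaceTime d) :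
    parabolicOp e a (dirDeriv ξ v) p = dirDeriv ξ (parabolicOp e a v) p := by
  have ha (j k : Fin d) : Differentiable ℝ fun s => a s j k :=
    (h.contDiff j k).differentiable (by simp)
  have hterm (j k : Fin d) :
      Differentiable ℝ fun q : SpaceTime d => a (q.2 e) j k * pdx j (pdx k v) q := by
    have := h.contDiff j k
    fun_prop (disch := simp)
  have hpdx (j : Fin d) {f : SpaceTime d → ℝ} (hf : ContDiff ℝ ∞ f) :
      pdx j (dirDeriv ξ f) = dirDeriv ξ (pdx j f) := dirDeriv_comm hf _ _
  have hpdt : pdt (dirDeriv ξ v) = dirDeriv ξ (pdt v) := dirDeriv_comm hv _ _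
  have hop : parabolicOp e a v =
      fun q => pdt v q + ∑ j, ∑ k, a (q.2 e) j k * pdx j (pdx k v) q := rfl
  rw [hop, dirDeriv_add (by fun_prop (disch := simp)) (by fun_prop),
    dirDeriv_sum fun j => by fun_prop]
  simp only [parabolicOp, pdxx, hpdt, hpdx _ hv]
  congr! 3 with j
  rw [dirDeriv_sum (hterm j)]
  congr! 1 with k
  rw [hpdx j (by fun_prop), dirDeriv_comp_coord_mul (ha j k) hξ (by fun_prop (disch := simp))]

/-- `v` is smooth and solves `L₀ v = 0` in the cylinder `Q_R`. -/
structure IsSolution (R : ℝ) (e : Fin d) (a : ℝ → Fin d → Fin d → ℝ) (v : SpaceTime d → ℝ) :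
    Prop where
  contDiff : ContDiff ℝ ∞ v
  eq_zero : ∀ p ∈ Qc d R, parabolicOp e a v p = 0

lemma IsSolution.mono {r : ℝ} (hr : 0 ≤ r) (hrR : r ≤ R) (hv : IsSolution R e a v) :
    IsSolution r e a v :=
  ⟨hv.contDiff, fun p hp => hv.eq_zero p (Qc_mono hr hrR hp)⟩

lemma IsSolution.dirDeriv (h : UniformlyElliptic δ a) (hv : IsSolution R e a v)
    {ξ : SpaceTime d} (hξ : ξ.2 e = 0) : IsSolution R e a (dirDeriv ξ v) :=
  ⟨contDiff_dirDeriv hv.contDiff, fun p hp => by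
    rw [h.parabolicOp_dirDeriv hξ hv.contDiff, dirDeriv_eqOn (isOpen_Qc R) hv.eq_zero hp,
      dirDeriv_const]⟩

/-- The integral of the density `Φ v` over a cylinder is controlled by the `L²` norm of the
solution `v` on any larger one, with a constant that depends on the coefficients only through
`δ`. -/
structure InteriorBound (δ : ℝ) (e : Fin d) (Φ : (SpaceTime d → ℝ) → SpaceTime d → ℝ) :
    Prop where
  continuous : ∀ v, ContDiff ℝ ∞ v → Continuous (Φ v)
  exists_bound : ∀ r R, 0 ≤ r → r < R → ∃ N, 0 ≤ N ∧ ∀ a, UniformlyElliptic δ a → ∀ v,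
    IsSolution R e a v → ∫ p in Qc d r, Φ v p ≤ N * ∫ p in Qc d R, v p ^ 2

namespace InteriorBound

variable {Φ Ψ : (SpaceTime d → ℝ) → SpaceTime d → ℝ}

lemma add (hΦ : InteriorBound δ e Φ) (hΨ : InteriorBound δ e Ψ) :
    InteriorBound δ e fun v p => Φ v p + Ψ v p := by
  refine ⟨fun v hv => (hΦ.continuous v hv).add (hΨ.continuous v hv), fun r R hr hrR => ?_⟩
  obtain ⟨N, hN, hNΦ⟩ := hΦ.exists_bound r R hr hrR
  obtain ⟨M, hM, hMΨ⟩ := hΨ.exists_bound r R hr hrR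
  refine ⟨N + M, by positivity, fun a ha v hv => ?_⟩
  rw [integral_add (integrableOn_Qc (hΦ.continuous v hv.contDiff) r)
    (integrableOn_Qc (hΨ.continuous v hv.contDiff) r), add_mul]
  exact add_le_add (hNΦ a ha v hv) (hMΨ a ha v hv)

lemma mono (hΨ : InteriorBound δ e Ψ) (hΦ : ∀ v, ContDiff ℝ ∞ v → Continuous (Φ v)) {C : ℝ}
    (hC : 0 ≤ C) (hle : ∀ a, UniformlyElliptic δ a → ∀ v, ContDiff ℝ ∞ v → ∀ p,
      parabolicOp e a v p = 0 → Φ v p ≤ C * Ψ v p) : InteriorBound δ e Φ := by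
  refine ⟨hΦ, fun r R hr hrR => ?_⟩
  obtain ⟨N, hN, hNΨ⟩ := hΨ.exists_bound r R hr hrR
  refine ⟨C * N, by positivity, fun a ha v hv => ?_⟩
  calc ∫ p in Qc d r, Φ v p
      ≤ ∫ p in Qc d r, C * Ψ v p :=
        setIntegral_mono_on (integrableOn_Qc (hΦ v hv.contDiff) r)
          (integrableOn_Qc ((hΨ.continuous v hv.contDiff).const_mul C) r)
          (isOpen_Qc r).measurableSet fun p hp =>
            hle a ha v hv.contDiff p (hv.eq_zero p (Qc_mono hr hrR.le hp))
    _ = C * ∫ p in Qc d r, Ψ v p := integral_const_mul C _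
    _ ≤ C * (N * ∫ p in Qc d R, v p ^ 2) := by gcongr; exact hNΨ a ha v hv
    _ = C * N * ∫ p in Qc d R, v p ^ 2 := by ring

lemma congr (hΨ : InteriorBound δ e Ψ) (h : ∀ v, ContDiff ℝ ∞ v → Φ v = Ψ v) :
    InteriorBound δ e Φ :=
  hΨ.mono (fun v hv => h v hv ▸ hΨ.continuous v hv) zero_le_one
    fun _ _ v hv p _ => by rw [h v hv, one_mul]

lemma sum {ι : Type*} {s : Finset ι} {Φ : ι → (SpaceTime d → ℝ) → SpaceTime d → ℝ}
    (h : ∀ i ∈ s, InteriorBound δ e (Φ i)) : InteriorBound δ e fun v p => ∑ i ∈ s, Φ i v p := by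
  classical
  induction s using Finset.induction_on with
  | empty =>
    exact ⟨fun v _ => by simpa using continuous_const,
      fun r R _ _ => ⟨0, le_rfl, fun a _ v _ => by simp⟩⟩
  | insert i s hi ih =>
    simp only [sum_insert hi]
    exact (h i (mem_insert_self i s)).add (ih fun j hj => h j (mem_insert_of_mem hj))

lemma comp_dirDeriv_of_sq {ξ : SpaceTime d} (hΦ : InteriorBound δ e Φ) (hξ : ξ.2 e = 0)
    (hsq : InteriorBound δ e fun v p => dirDeriv ξ v p ^ 2) :
    InteriorBound δ e fun v => Φ (dirDeriv ξ v) := by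
  refine ⟨fun v hv => hΦ.continuous _ (contDiff_dirDeriv hv), fun r R hr hrR => ?_⟩
  obtain ⟨ρ, hrρ, hρR⟩ := exists_between hrR
  have hρ : 0 ≤ ρ := hr.trans hrρ.le
  obtain ⟨N, hN, hNΦ⟩ := hΦ.exists_bound r ρ hr hrρ
  obtain ⟨M, hM, hMsq⟩ := hsq.exists_bound ρ R hρ hρR
  refine ⟨N * M, by positivity, fun a ha v hv => ?_⟩
  calc ∫ p in Qc d r, Φ (dirDeriv ξ v) p
      ≤ N * ∫ p in Qc d ρ, dirDeriv ξ v p ^ 2 :=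
        hNΦ a ha _ ((hv.dirDeriv ha hξ).mono hρ hρR.le)
    _ ≤ N * (M * ∫ p in Qc d R, v p ^ 2) := by gcongr; exact hMsq a ha v hv
    _ = N * M * ∫ p in Qc d R, v p ^ 2 := by ring

lemma sq (δ : ℝ) (e : Fin d) : InteriorBound δ e fun v p => v p ^ 2 :=
  ⟨fun _ hv => hv.continuous.pow 2, fun r R hr hrR => ⟨1, zero_le_one, fun a _ v hv => by
    rw [one_mul]
    exact setIntegral_Qc_mono hr hrR.le (hv.contDiff.continuous.pow 2) fun _ => sq_nonneg _⟩⟩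

lemma grad_sq (hδ : 0 < δ) (e : Fin d) : InteriorBound δ e fun v p => ∑ j, pdx j v p ^ 2 := by
  refine ⟨fun v hv => by fun_prop, fun r R hr hrR => ?_⟩
  obtain ⟨N, hN, hbound⟩ := exists_setIntegral_grad_le d hδ hr hrR
  refine ⟨N, hN, fun a ha v hv => ?_⟩
  simpa using hbound e a ha v hv.contDiff 0 (fun _ => contDiff_const) rfl fun p hp => by
    rw [hv.eq_zero p hp]
    exact (sum_eq_zero fun k _ => dirDeriv_const 0).symm

lemma pdx_sq (hδ : 0 < δ) (e j : Fin d) : InteriorBound δ e fun v p => pdx j v p ^ 2 :=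
  (grad_sq hδ e).mono (fun v hv => by fun_prop) zero_le_one fun _ _ v _ p _ => by
    rw [one_mul]
    exact single_le_sum (f := fun j => pdx j v p ^ 2) (fun j _ => sq_nonneg _) (mem_univ j)

lemma tangentialHessianSq (hδ : 0 < δ) (e : Fin d) :
    InteriorBound δ e (tangentialHessianSq e) :=
  sum fun k hk => (grad_sq hδ e).comp_dirDeriv_of_sq (ξ := spaceDir k)
    (by simp [(ne_of_mem_erase hk).symm]) (pdx_sq hδ e k)

lemma pdt_sq (hδ : 0 < δ) (e : Fin d) : InteriorBound δ e fun v p => pdt v p ^ 2 := by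
  refine ⟨fun v hv => by fun_prop, fun r R hr hrR => ?_⟩
  obtain ⟨ρ, hrρ, hρR⟩ := exists_between hrR
  have hρ : 0 ≤ ρ := hr.trans hrρ.le
  obtain ⟨N, hN, htime⟩ := exists_setIntegral_pdt_sq_le d hδ hr hrρ
  obtain ⟨M, hM, hspace⟩ :=
    ((pdx_sq hδ e e).add (tangentialHessianSq hδ e)).exists_bound ρ R hρ hρR
  refine ⟨N * M, by positivity, fun a ha v hv => ?_⟩
  calc ∫ p in Qc d r, pdt v p ^ 2
      ≤ N * ∫ p in Qc d ρ,
          (pdx e v p ^ 2 + _root_.tangentialHessianSq e v p + parabolicOp e a v p ^ 2) :=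
        htime e a ha v hv.contDiff
    _ = N * ∫ p in Qc d ρ, (pdx e v p ^ 2 + _root_.tangentialHessianSq e v p) := by
        congr 1
        refine setIntegral_congr_fun (isOpen_Qc ρ).measurableSet fun p hp => ?_
        simp [hv.eq_zero p (Qc_mono hρ hρR.le hp)]
    _ ≤ N * (M * ∫ p in Qc d R, v p ^ 2) := by gcongr; exact hspace a ha v hv
    _ = N * M * ∫ p in Qc d R, v p ^ 2 := by ring

lemma pdx_pdx_self_sq (hδ : 0 < δ) (e : Fin d) :
    InteriorBound δ e fun v p => pdx e (pdx e v) p ^ 2 := by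
  refine ((pdt_sq hδ e).add (tangentialHessianSq hδ e)).mono (fun v hv => by fun_prop)
    (C := 3 * (δ⁻¹ ^ 2 + hessianConst d δ)) ?_ fun a ha v hv p hp => ?_
  · have := hessianConst_nonneg d δ
    positivity
  · simpa [hp] using ha.sq_pdx_pdx_self_le (e := e) hv p

lemma dirDeriv_sq (hδ : 0 < δ) (e : Fin d) (ξ : SpaceTime d) :
    InteriorBound δ e fun v p => dirDeriv ξ v p ^ 2 := by
  refine ((pdt_sq hδ e).add (grad_sq hδ e)).mono
    (fun v hv => (contDiff_dirDeriv hv).continuous.pow 2)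
    (C := 2 * (ξ.1 ^ 2 + ∑ j, ξ.2 j ^ 2)) (by positivity) fun _ _ v _ p _ => ?_
  have hξ : ξ = ξ.1 • timeDir d + ∑ j, ξ.2 j • spaceDir j := by
    ext j <;> simp [Prod.fst_sum, Prod.snd_sum, Finset.sum_apply, Pi.single_apply]
  have hexpand : dirDeriv ξ v p = ξ.1 * pdt v p + ∑ j, ξ.2 j * pdx j v p := by
    change fderiv ℝ v p ξ = _
    conv_lhs => rw [hξ]
    simp only [map_add, map_sum, map_smul, smul_eq_mul]
    rfl
  have hcs := sum_mul_sq_le_sq_mul_sq univ ξ.2 fun j => pdx j v p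
  have hξ2 : 0 ≤ ∑ j, ξ.2 j ^ 2 := sum_nonneg fun _ _ => sq_nonneg _
  have hgrad : 0 ≤ ∑ j, pdx j v p ^ 2 := sum_nonneg fun _ _ => sq_nonneg _
  rw [hexpand]
  refine (add_sq_le (a := ξ.1 * pdt v p)).trans ?_
  nlinarith [mul_nonneg hξ2 (sq_nonneg (pdt v p)), mul_nonneg (sq_nonneg ξ.1) hgrad]

lemma comp_dirDeriv (hδ : 0 < δ) (hΦ : InteriorBound δ e Φ) {ξ : SpaceTime d} (hξ : ξ.2 e = 0) :
    InteriorBound δ e fun v => Φ (dirDeriv ξ v) :=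
  hΦ.comp_dirDeriv_of_sq hξ (dirDeriv_sq hδ e ξ)

lemma mixedDensity_append (hδ : 0 < δ) {S : (SpaceTime d → ℝ) → SpaceTime d → ℝ}
    (hS : ∀ ξ v, ContDiff ℝ ∞ v → dirDeriv ξ (S v) = S (dirDeriv ξ v)) {l m : List (SpaceTime d)}
    (hl : ∀ ξ ∈ l, ξ.2 e = 0) (hm : InteriorBound δ e fun v => mixedDensity m (S v)) :
    InteriorBound δ e fun v => mixedDensity (l ++ m) (S v) := by
  induction l with
  | nil => exact hm
  | cons ξ l ih =>
    obtain ⟨hξ, hl⟩ := List.forall_mem_cons.1 hl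
    refine ((ih hl).add ((ih hl).comp_dirDeriv hδ hξ)).congr fun v hv => ?_
    simp only [List.cons_append, mixedDensity, hS ξ v hv]

end InteriorBound

/-- The supremum of `S v` over a cylinder is controlled by the `L²` norm of the solution `v` on
any larger one, with a constant that depends on the coefficients only through `δ`. -/
def PointwiseBound (δ : ℝ) (e : Fin d) (S : (SpaceTime d → ℝ) → SpaceTime d → ℝ) : Prop :=
  ∀ r R, 0 ≤ r → r < R → ∃ N, 0 ≤ N ∧ ∀ a, UniformlyElliptic δ a → ∀ v,
    IsSolution R e a v → ∀ p ∈ Qc d r, S v p ^ 2 ≤ N * ∫ p in Qc d R, v p ^ 2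

namespace PointwiseBound

variable {S : (SpaceTime d → ℝ) → SpaceTime d → ℝ}

lemma of_interiorBound (hδ : 0 < δ) (hsmooth : ∀ v, ContDiff ℝ ∞ v → ContDiff ℝ ∞ (S v))
    (hcomm : ∀ ξ v, ContDiff ℝ ∞ v → dirDeriv ξ (S v) = S (dirDeriv ξ v))
    (hS : InteriorBound δ e fun v => mixedDensity [spaceDir e] (S v)) :
    PointwiseBound δ e S := by
  intro r R hr hrR
  obtain ⟨ρ, hrρ, hρR⟩ := exists_between hrR
  set l := (univ.erase e).toList
  have hnodup : (l ++ [e]).Nodup := by simp [l, List.nodup_append, nodup_toList]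
  have htangential : ∀ ξ ∈ timeDir d :: l.map spaceDir, ξ.2 e = 0 := by
    rw [List.forall_mem_cons, List.forall_mem_map]
    exact ⟨rfl, fun k hk => Pi.single_eq_of_ne' (ne_of_mem_erase (mem_toList.1 hk)) 1⟩
  obtain ⟨C, hC, hsob⟩ := exists_sq_le_mul_setIntegral_mixedDensity hr hrρ hnodup
    (fun i => by by_cases hi : i = e <;> simp [l, hi])
  obtain ⟨N, hN, hbound⟩ := (InteriorBound.mixedDensity_append hδ hcomm
    htangential hS).exists_bound ρ R (hr.trans hrρ.le) hρR
  refine ⟨C * N, by positivity, fun a ha v hv p hp => ?_⟩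
  calc S v p ^ 2
      ≤ C * ∫ q in Qc d ρ, mixedDensity (timeDir d :: (l ++ [e]).map spaceDir) (S v) q :=
        hsob _ (hsmooth v hv.contDiff) p hp
    _ ≤ C * (N * ∫ q in Qc d R, v q ^ 2) := by
        gcongr
        simpa using hbound a ha v hv
    _ = C * N * ∫ q in Qc d R, v q ^ 2 := by ring

lemma comp_dirDeriv (hδ : 0 < δ) (hS : PointwiseBound δ e S) {ξ : SpaceTime d}
    (hξ : ξ.2 e = 0) : PointwiseBound δ e fun v => S (dirDeriv ξ v) := by
  intro r R hr hrR
  obtain ⟨ρ, hrρ, hρR⟩ := exists_between hrR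
  have hρ : 0 ≤ ρ := hr.trans hrρ.le
  obtain ⟨N, hN, hNS⟩ := hS r ρ hr hrρ
  obtain ⟨M, hM, hMsq⟩ := (InteriorBound.dirDeriv_sq hδ e ξ).exists_bound ρ R hρ hρR
  refine ⟨N * M, by positivity, fun a ha v hv p hp => ?_⟩
  calc S (dirDeriv ξ v) p ^ 2
      ≤ N * ∫ q in Qc d ρ, dirDeriv ξ v q ^ 2 :=
        hNS a ha _ ((hv.dirDeriv ha hξ).mono hρ hρR.le) p hp
    _ ≤ N * (M * ∫ q in Qc d R, v q ^ 2) := by gcongr; exact hMsq a ha v hv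
    _ = N * M * ∫ q in Qc d R, v q ^ 2 := by ring

lemma id (hδ : 0 < δ) (e : Fin d) : PointwiseBound δ e fun v => v :=
  of_interiorBound hδ (fun _ hv => hv) (fun _ _ _ => rfl)
    ((InteriorBound.sq δ e).add (InteriorBound.pdx_sq hδ e e))

lemma pdt (hδ : 0 < δ) (e : Fin d) : PointwiseBound δ e pdt :=
  (PointwiseBound.id hδ e).comp_dirDeriv hδ (ξ := timeDir d) rfl

lemma pdx (hδ : 0 < δ) (e j : Fin d) : PointwiseBound δ e (pdx j) := by
  obtain rfl | hj := eq_or_ne j e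
  · exact of_interiorBound hδ (fun _ hv => contDiff_pdx j hv) (fun ξ v hv => dirDeriv_comm hv _ _)
      ((InteriorBound.pdx_sq hδ j j).add (InteriorBound.pdx_pdx_self_sq hδ j))
  · exact (PointwiseBound.id hδ e).comp_dirDeriv hδ (ξ := spaceDir j) (by simp [hj.symm])

lemma pdx_pdx (hδ : 0 < δ) (e j : Fin d) {k : Fin d} (hk : k ≠ e) :
    PointwiseBound δ e fun v => _root_.pdx j (_root_.pdx k v) :=
  (PointwiseBound.pdx hδ e j).comp_dirDeriv hδ (ξ := spaceDir k) (by simp [hk.symm])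

end PointwiseBound

end Interior

/-! ### Energy estimates for the Dirichlet problem -/

section Dirichlet

variable {d : ℕ} {δ r R : ℝ} {e : Fin d} {a : ℝ → Fin d → Fin d → ℝ}
  {f g u h : SpaceTime d → ℝ}

lemma pdt_sub (hf : ContDiff ℝ ∞ f) (hg : ContDiff ℝ ∞ g) :
    pdt (fun q => f q - g q) = fun q => pdt f q - pdt g q :=
  funext fun _ => dirDeriv_sub (hf.differentiable (by simp)) (hg.differentiable (by simp))

lemma pdx_sub (k : Fin d) (hf : ContDiff ℝ ∞ f) (hg : ContDiff ℝ ∞ g) :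
    pdx k (fun q => f q - g q) = fun q => pdx k f q - pdx k g q :=
  funext fun _ => dirDeriv_sub (hf.differentiable (by simp)) (hg.differentiable (by simp))

lemma parabolicOp_sub (e : Fin d) (a : ℝ → Fin d → Fin d → ℝ) (hf : ContDiff ℝ ∞ f)
    (hg : ContDiff ℝ ∞ g) (p : SpaceTime d) :
    parabolicOp e a (fun q => f q - g q) p = parabolicOp e a f p - parabolicOp e a g p := by
  have hsecond (j k : Fin d) : pdxx j k (fun q => f q - g q) p = pdxx j k f p - pdxx j k g p := by
    simp only [pdxx, pdx_sub k hf hg, pdx_sub j (contDiff_pdx k hf) (contDiff_pdx k hg)]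
  simp only [parabolicOp, pdt_sub hf hg, hsecond, mul_sub, sum_sub_distrib]
  ring

lemma exists_setIntegral_grad_pdx_le (d : ℕ) (hδ : 0 < δ) (hr : 0 ≤ r) (hrR : r < R) :
    ∃ N, 0 ≤ N ∧ ∀ (e k : Fin d), k ≠ e → ∀ a, UniformlyElliptic δ a → ∀ v, ContDiff ℝ ∞ v →
      ∫ p in Qc d r, ∑ j, pdx j (pdx k v) p ^ 2
        ≤ N * ∫ p in Qc d R, (pdx k v p ^ 2 + parabolicOp e a v p ^ 2) := by
  obtain ⟨N, hN, hbound⟩ := exists_setIntegral_grad_le d hδ hr hrR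
  refine ⟨N, hN, fun e k hk a ha v hv => ?_⟩
  have hLv := ha.contDiff_parabolicOp e hv
  refine (hbound e a ha (pdx k v) (by fun_prop) (Pi.single k (parabolicOp e a v)) (fun l => ?_)
    (Pi.single_eq_of_ne' hk _) fun p _ => ?_).trans_eq ?_
  · obtain rfl | hl := eq_or_ne l k
    · simpa using hLv
    · rw [Pi.single_eq_of_ne hl]
      exact contDiff_const
  · rw [sum_eq_single k (fun l _ hl => by
      rw [Pi.single_eq_of_ne hl]; exact dirDeriv_const 0) (by simp), Pi.single_eq_same]
    exact ha.parabolicOp_dirDeriv (ξ := spaceDir k) (by simp [hk.symm]) hv p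
  · congr! 4 with p
    rw [sum_eq_single k (fun l _ hl => by simp [hl]) (by simp), Pi.single_eq_same]

lemma exists_setIntegral_tangentialHessianSq_le_of_eq_zero_on_pbQc (d : ℕ) (hδ : 0 < δ)
    (hr : 0 ≤ r) (hrR : r < R) :
    ∃ N, 0 ≤ N ∧ ∀ (e : Fin d) a, UniformlyElliptic δ a → ∀ w, ContDiff ℝ ∞ w →
      (∀ p ∈ pbQc d R, w p = 0) →
      ∫ p in Qc d r, tangentialHessianSq e w p ≤ N * ∫ p in Qc d R, parabolicOp e a w p ^ 2 := by
  obtain ⟨N, hN, hbound⟩ := exists_setIntegral_grad_pdx_le d hδ hr hrR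
  refine ⟨N * (δ⁻¹ ^ 5 * (1 + R ^ 2) ^ 2 + d), by positivity, fun e a ha w hw hbdry => ?_⟩
  have hL := (ha.contDiff_parabolicOp e hw).continuous
  have hgrad := ha.setIntegral_grad_le_of_eq_zero_on_pbQc (e := e) hw hbdry
  set A := ∫ p in Qc d R, parabolicOp e a w p ^ 2
  have : 0 ≤ A := integral_nonneg fun _ => sq_nonneg _
  have hcard : (#(univ.erase e) : ℝ) ≤ d := by
    exact_mod_cast (card_le_univ _).trans_eq (Fintype.card_fin d)
  calc ∫ p in Qc d r, tangentialHessianSq e w p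
      = ∑ k ∈ univ.erase e, ∫ p in Qc d r, ∑ j, pdx j (pdx k w) p ^ 2 :=
        integral_finsetSum _ fun k _ => integrableOn_Qc (by fun_prop) r
    _ ≤ ∑ k ∈ univ.erase e, N * ∫ p in Qc d R, (pdx k w p ^ 2 + parabolicOp e a w p ^ 2) :=
        sum_le_sum fun k hk => hbound e k (ne_of_mem_erase hk) a ha w hw
    _ = N * (∑ k ∈ univ.erase e, (∫ p in Qc d R, pdx k w p ^ 2) + #(univ.erase e) * A) := by
        rw [← mul_sum]
        congr 1
        rw [← nsmul_eq_mul, ← sum_const, ← sum_add_distrib]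
        exact sum_congr rfl fun k _ => integral_add (integrableOn_Qc (by fun_prop) R)
          (integrableOn_Qc (by fun_prop) R)
    _ ≤ N * (∑ k, (∫ p in Qc d R, pdx k w p ^ 2) + d * A) := by
        gcongr
        exact erase_subset e univ
    _ = N * ((∫ p in Qc d R, ∑ k, pdx k w p ^ 2) + d * A) := by
        rw [integral_finsetSum _ fun k _ => integrableOn_Qc (by fun_prop) R]
    _ ≤ N * (δ⁻¹ ^ 5 * (1 + R ^ 2) ^ 2 * A + d * A) := by gcongr
    _ = N * (δ⁻¹ ^ 5 * (1 + R ^ 2) ^ 2 + d) * A := by ring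

lemma exists_setIntegral_pdt_sq_le_of_eq_zero_on_pbQc (d : ℕ) (hδ : 0 < δ)
    (hr : 0 ≤ r) (hrR : r < R) :
    ∃ N, 0 ≤ N ∧ ∀ (e : Fin d) a, UniformlyElliptic δ a → ∀ w, ContDiff ℝ ∞ w →
      (∀ p ∈ pbQc d R, w p = 0) →
      ∫ p in Qc d r, pdt w p ^ 2 ≤ N * ∫ p in Qc d R, parabolicOp e a w p ^ 2 := by
  obtain ⟨ρ, hrρ, hρR⟩ := exists_between hrR
  have hρ : 0 ≤ ρ := hr.trans hrρ.le
  obtain ⟨N, hN, htime⟩ := exists_setIntegral_pdt_sq_le d hδ hr hrρ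
  obtain ⟨M, hM, hhess⟩ :=
    exists_setIntegral_tangentialHessianSq_le_of_eq_zero_on_pbQc d hδ hρ hρR
  refine ⟨N * (δ⁻¹ ^ 5 * (1 + R ^ 2) ^ 2 + M + 1), by positivity, fun e a ha w hw hbdry => ?_⟩
  have hL := (ha.contDiff_parabolicOp e hw).continuous
  set A := ∫ p in Qc d R, parabolicOp e a w p ^ 2
  have hgrad : ∫ p in Qc d ρ, pdx e w p ^ 2 ≤ δ⁻¹ ^ 5 * (1 + R ^ 2) ^ 2 * A := calc
    ∫ p in Qc d ρ, pdx e w p ^ 2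
      ≤ ∫ p in Qc d R, pdx e w p ^ 2 :=
        setIntegral_Qc_mono hρ hρR.le (by fun_prop) fun _ => sq_nonneg _
    _ ≤ ∫ p in Qc d R, ∑ j, pdx j w p ^ 2 :=
        setIntegral_mono (integrableOn_Qc (by fun_prop) R) (integrableOn_Qc (by fun_prop) R)
          fun p => single_le_sum (f := fun j => pdx j w p ^ 2) (fun _ _ => sq_nonneg _)
            (mem_univ e)
    _ ≤ δ⁻¹ ^ 5 * (1 + R ^ 2) ^ 2 * A := ha.setIntegral_grad_le_of_eq_zero_on_pbQc hw hbdry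
  have hsource : ∫ p in Qc d ρ, parabolicOp e a w p ^ 2 ≤ A :=
    setIntegral_Qc_mono hρ hρR.le (by fun_prop) fun _ => sq_nonneg _
  calc ∫ p in Qc d r, pdt w p ^ 2
      ≤ N * ∫ p in Qc d ρ,
          (pdx e w p ^ 2 + tangentialHessianSq e w p + parabolicOp e a w p ^ 2) :=
        htime e a ha w hw
    _ = N * ((∫ p in Qc d ρ, pdx e w p ^ 2) + (∫ p in Qc d ρ, tangentialHessianSq e w p)
          + ∫ p in Qc d ρ, parabolicOp e a w p ^ 2) := by
        rw [integral_add (integrableOn_Qc (by fun_prop) ρ) (integrableOn_Qc (by fun_prop) ρ),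
          integral_add (integrableOn_Qc (by fun_prop) ρ) (integrableOn_Qc (by fun_prop) ρ)]
    _ ≤ N * (δ⁻¹ ^ 5 * (1 + R ^ 2) ^ 2 * A + M * A + A) := by
        gcongr
        exact hhess e a ha w hw hbdry
    _ = N * (δ⁻¹ ^ 5 * (1 + R ^ 2) ^ 2 + M + 1) * A := by ring

/-- `h` solves `L₀ h = 0` in `Q_R` and takes the smooth boundary values `u` on the parabolic
boundary. -/
structure IsDirichletSolution (R : ℝ) (e : Fin d) (a : ℝ → Fin d → Fin d → ℝ)
    (u h : SpaceTime d → ℝ) : Prop extends IsSolution R e a h where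
  contDiff_boundary : ContDiff ℝ ∞ u
  eq_boundary : ∀ p ∈ pbQc d R, h p = u p

/-- The right-hand side `‖L₀ u‖ + ‖u_{xx}‖` of the main estimate, with norms in `L²(Q_R)`. -/
noncomputable def dataNorm (R : ℝ) (e : Fin d) (a : ℝ → Fin d → Fin d → ℝ)
    (u : SpaceTime d → ℝ) : ℝ :=
  √(∫ p in Qc d R, parabolicOp e a u p ^ 2) + √(∫ p in Qc d R, ∑ j, ∑ k, pdxx j k u p ^ 2)

lemma dataNorm_nonneg (R : ℝ) (e : Fin d) (a : ℝ → Fin d → Fin d → ℝ) (u : SpaceTime d → ℝ) :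
    0 ≤ dataNorm R e a u := by
  unfold dataNorm
  positivity

lemma hessianSq_nonneg (u : SpaceTime d → ℝ) (p : SpaceTime d) :
    0 ≤ ∑ j, ∑ k, pdxx j k u p ^ 2 :=
  sum_nonneg fun _ _ => sum_nonneg fun _ _ => sq_nonneg _

lemma setIntegral_parabolicOp_sq_add_hessianSq_le_dataNorm_sq (R : ℝ) (e : Fin d)
    (a : ℝ → Fin d → Fin d → ℝ) (u : SpaceTime d → ℝ) :
    (∫ p in Qc d R, parabolicOp e a u p ^ 2) + ∫ p in Qc d R, ∑ j, ∑ k, pdxx j k u p ^ 2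
      ≤ dataNorm R e a u ^ 2 := by
  have hop : 0 ≤ ∫ p in Qc d R, parabolicOp e a u p ^ 2 := integral_nonneg fun _ => sq_nonneg _
  have hhess : 0 ≤ ∫ p in Qc d R, ∑ j, ∑ k, pdxx j k u p ^ 2 :=
    integral_nonneg (hessianSq_nonneg u)
  rw [dataNorm, add_sq, Real.sq_sqrt hop, Real.sq_sqrt hhess]
  have := mul_nonneg (Real.sqrt_nonneg (∫ p in Qc d R, parabolicOp e a u p ^ 2))
    (Real.sqrt_nonneg (∫ p in Qc d R, ∑ j, ∑ k, pdxx j k u p ^ 2))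
  linarith

lemma setIntegral_parabolicOp_sq_le_dataNorm_sq (R : ℝ) (e : Fin d)
    (a : ℝ → Fin d → Fin d → ℝ) (u : SpaceTime d → ℝ) :
    ∫ p in Qc d R, parabolicOp e a u p ^ 2 ≤ dataNorm R e a u ^ 2 :=
  (le_add_of_nonneg_right (integral_nonneg (hessianSq_nonneg u))).trans
    (setIntegral_parabolicOp_sq_add_hessianSq_le_dataNorm_sq R e a u)

lemma UniformlyElliptic.setIntegral_le_dataNorm_sq (ha : UniformlyElliptic δ a) (hr : 0 ≤ r)
    (hrR : r ≤ R) (hu : ContDiff ℝ ∞ u) (hf : Continuous f) {C : ℝ} (hC : 0 ≤ C)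
    (hle : ∀ p, f p ≤ C * (parabolicOp e a u p ^ 2 + ∑ j, ∑ k, pdxx j k u p ^ 2)) :
    ∫ p in Qc d r, f p ≤ C * dataNorm R e a u ^ 2 := by
  have hL := (ha.contDiff_parabolicOp e hu).continuous
  have hhess : Continuous fun p => ∑ j, ∑ k, pdxx j k u p ^ 2 := by unfold pdxx; fun_prop
  calc ∫ p in Qc d r, f p
      ≤ ∫ p in Qc d r, C * (parabolicOp e a u p ^ 2 + ∑ j, ∑ k, pdxx j k u p ^ 2) :=
        setIntegral_mono (integrableOn_Qc hf r) (integrableOn_Qc (by fun_prop) r) hle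
    _ ≤ ∫ p in Qc d R, C * (parabolicOp e a u p ^ 2 + ∑ j, ∑ k, pdxx j k u p ^ 2) :=
        setIntegral_Qc_mono hr hrR (by fun_prop) fun p => by
          have := hessianSq_nonneg u p
          positivity
    _ = C * ((∫ p in Qc d R, parabolicOp e a u p ^ 2)
          + ∫ p in Qc d R, ∑ j, ∑ k, pdxx j k u p ^ 2) := by
        rw [integral_const_mul,
          integral_add (integrableOn_Qc (by fun_prop) R) (integrableOn_Qc hhess R)]
    _ ≤ C * dataNorm R e a u ^ 2 := by
        gcongr
        exact setIntegral_parabolicOp_sq_add_hessianSq_le_dataNorm_sq R e a u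

lemma IsDirichletSolution.setIntegral_parabolicOp_sub_sq (hh : IsDirichletSolution R e a u h) :
    ∫ p in Qc d R, parabolicOp e a (fun q => h q - u q) p ^ 2
      = ∫ p in Qc d R, parabolicOp e a u p ^ 2 :=
  setIntegral_congr_fun (isOpen_Qc R).measurableSet fun p hp => by
    simp [parabolicOp_sub e a hh.contDiff hh.contDiff_boundary, hh.eq_zero p hp]

lemma UniformlyElliptic.pdt_sq_le (ha : UniformlyElliptic δ a) (e : Fin d)
    (v : SpaceTime d → ℝ) (p : SpaceTime d) :
    pdt v p ^ 2 ≤ 2 * (1 + (d * d) * δ⁻¹ ^ 2)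
      * (parabolicOp e a v p ^ 2 + ∑ j, ∑ k, pdxx j k v p ^ 2) := by
  have hsum : (∑ j, ∑ k, a (p.2 e) j k * pdxx j k v p) ^ 2
      ≤ (d * d) * δ⁻¹ ^ 2 * ∑ j, ∑ k, pdxx j k v p ^ 2 := by
    have := sq_sum_mul_le (s := univ) (b := fun i : Fin d × Fin d => a (p.2 e) i.1 i.2)
      (x := fun i => pdxx i.1 i.2 v p) fun i _ => ha.abs_le (p.2 e) i.1 i.2
    simpa [Fintype.sum_prod_type] using this
  have hpdt : pdt v p = parabolicOp e a v p - ∑ j, ∑ k, a (p.2 e) j k * pdxx j k v p :=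
    (add_sub_cancel_right _ _).symm
  have hhess := hessianSq_nonneg v p
  have hrest : 0 ≤ (d * d) * δ⁻¹ ^ 2 * parabolicOp e a v p ^ 2 := by positivity
  rw [hpdt]
  nlinarith [sq_nonneg (parabolicOp e a v p + ∑ j, ∑ k, a (p.2 e) j k * pdxx j k v p)]

lemma tangentialHessianSq_le_hessianSq (e : Fin d) (v : SpaceTime d → ℝ) (p : SpaceTime d) :
    tangentialHessianSq e v p ≤ ∑ j, ∑ k, pdxx j k v p ^ 2 := by
  rw [sum_comm]
  exact sum_le_sum_of_subset_of_nonneg (erase_subset e univ)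
    fun k _ _ => sum_nonneg fun j _ => sq_nonneg _

lemma sq_pdx_pdx_le_tangentialHessianSq {k : Fin d} (hk : k ≠ e) (j : Fin d)
    (v : SpaceTime d → ℝ) (p : SpaceTime d) :
    pdx j (pdx k v) p ^ 2 ≤ tangentialHessianSq e v p :=
  (single_le_sum (f := fun j => pdx j (pdx k v) p ^ 2) (fun _ _ => sq_nonneg _)
    (mem_univ j)).trans <|
  single_le_sum (f := fun k => ∑ j, pdx j (pdx k v) p ^ 2)
    (fun _ _ => sum_nonneg fun _ _ => sq_nonneg _) (mem_erase.2 ⟨hk, mem_univ k⟩)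

/-- The integral of the density `Φ h` over a cylinder is controlled by the data of the Dirichlet
problem that `h` solves on any larger one, with a constant that depends on the coefficients only
through `δ`. -/
def DirichletEnergyBound (δ : ℝ) (e : Fin d) (Φ : (SpaceTime d → ℝ) → SpaceTime d → ℝ) : Prop :=
  ∀ r R, 0 ≤ r → r < R → ∃ N, 0 ≤ N ∧ ∀ a, UniformlyElliptic δ a → ∀ u h,
    IsDirichletSolution R e a u h → ∫ p in Qc d r, Φ h p ≤ N * dataNorm R e a u ^ 2

namespace DirichletEnergyBound

variable {Φ : (SpaceTime d → ℝ) → SpaceTime d → ℝ}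

lemma of_eq_zero_on_pbQc (hcont : ∀ v, ContDiff ℝ ∞ v → Continuous (Φ v))
    (hsub : ∀ f g, ContDiff ℝ ∞ f → ContDiff ℝ ∞ g → ∀ p,
      Φ f p ≤ 2 * Φ (fun q => f q - g q) p + 2 * Φ g p) {C : ℝ} (hC : 0 ≤ C)
    (hdata : ∀ a, UniformlyElliptic δ a → ∀ u, ContDiff ℝ ∞ u → ∀ p,
      Φ u p ≤ C * (parabolicOp e a u p ^ 2 + ∑ j, ∑ k, pdxx j k u p ^ 2))
    (hzero : ∀ r R, 0 ≤ r → r < R → ∃ N, 0 ≤ N ∧ ∀ a, UniformlyElliptic δ a → ∀ w,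
      ContDiff ℝ ∞ w → (∀ p ∈ pbQc d R, w p = 0) →
        ∫ p in Qc d r, Φ w p ≤ N * ∫ p in Qc d R, parabolicOp e a w p ^ 2) :
    DirichletEnergyBound δ e Φ := by
  intro r R hr hrR
  obtain ⟨N, hN, hw⟩ := hzero r R hr hrR
  refine ⟨2 * N + 2 * C, by positivity, fun a ha u h hh => ?_⟩
  have hh_smooth := hh.contDiff
  have hu_smooth := hh.contDiff_boundary
  have hΦh := hcont h hh_smooth
  have hΦu := hcont u hu_smooth
  have hΦw := hcont _ (hh_smooth.sub hu_smooth)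
  have hw := hw a ha _ (hh_smooth.sub hu_smooth) fun p hp => sub_eq_zero.2 (hh.eq_boundary p hp)
  rw [hh.setIntegral_parabolicOp_sub_sq] at hw
  have hu := ha.setIntegral_le_dataNorm_sq (e := e) hr hrR.le hu_smooth hΦu hC
    (hdata a ha u hu_smooth)
  have hop := setIntegral_parabolicOp_sq_le_dataNorm_sq R e a u
  calc ∫ p in Qc d r, Φ h p
      ≤ ∫ p in Qc d r, (2 * Φ (fun q => h q - u q) p + 2 * Φ u p) :=
        setIntegral_mono (integrableOn_Qc hΦh r) (integrableOn_Qc (by fun_prop) r)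
          (hsub h u hh_smooth hu_smooth)
    _ = 2 * (∫ p in Qc d r, Φ (fun q => h q - u q) p) + 2 * ∫ p in Qc d r, Φ u p := by
        rw [integral_add (integrableOn_Qc (by fun_prop) r) (integrableOn_Qc (by fun_prop) r),
          integral_const_mul, integral_const_mul]
    _ ≤ 2 * (N * ∫ p in Qc d R, parabolicOp e a u p ^ 2) + 2 * (C * dataNorm R e a u ^ 2) := by
        gcongr
    _ ≤ 2 * (N * dataNorm R e a u ^ 2) + 2 * (C * dataNorm R e a u ^ 2) := by gcongr
    _ = (2 * N + 2 * C) * dataNorm R e a u ^ 2 := by ring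

lemma pdt_sq (hδ : 0 < δ) (e : Fin d) : DirichletEnergyBound δ e fun v p => pdt v p ^ 2 := by
  refine of_eq_zero_on_pbQc (fun v hv => by fun_prop) (fun f g hf hg p => ?_)
    (C := 2 * (1 + (d * d) * δ⁻¹ ^ 2)) (by positivity)
    (fun a ha u _ p => ha.pdt_sq_le e u p) fun r R hr hrR => ?_
  · rw [pdt_sub hf hg]
    nlinarith [sq_nonneg (pdt f p - 2 * pdt g p)]
  · obtain ⟨N, hN, hbound⟩ := exists_setIntegral_pdt_sq_le_of_eq_zero_on_pbQc d hδ hr hrR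
    exact ⟨N, hN, hbound e⟩

lemma tangentialHessianSq (hδ : 0 < δ) (e : Fin d) :
    DirichletEnergyBound δ e (tangentialHessianSq e) := by
  refine of_eq_zero_on_pbQc (fun v hv => by fun_prop) (fun f g hf hg p => ?_)
    (C := 1) zero_le_one (fun _ _ u _ p => ?_) fun r R hr hrR => ?_
  · simp only [_root_.tangentialHessianSq, mul_sum, ← sum_add_distrib]
    refine sum_le_sum fun k _ => sum_le_sum fun j _ => ?_
    rw [pdx_sub k hf hg, pdx_sub j (contDiff_pdx k hf) (contDiff_pdx k hg)]
    nlinarith [sq_nonneg (pdx j (pdx k f) p - 2 * pdx j (pdx k g) p)]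
  · rw [one_mul]
    exact (tangentialHessianSq_le_hessianSq e u p).trans (le_add_of_nonneg_left (sq_nonneg _))
  · obtain ⟨N, hN, hbound⟩ :=
      exists_setIntegral_tangentialHessianSq_le_of_eq_zero_on_pbQc d hδ hr hrR
    exact ⟨N, hN, hbound e⟩

lemma pdx_pdx_sq (hδ : 0 < δ) (e j : Fin d) {k : Fin d} (hk : k ≠ e) :
    DirichletEnergyBound δ e fun v p => pdx j (pdx k v) p ^ 2 := by
  intro r R hr hrR
  obtain ⟨N, hN, hbound⟩ := DirichletEnergyBound.tangentialHessianSq hδ e r R hr hrR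
  refine ⟨N, hN, fun a ha u h hh => (setIntegral_mono ?_ ?_ fun p => ?_).trans
    (hbound a ha u h hh)⟩
  · have := hh.contDiff
    exact integrableOn_Qc (by fun_prop) r
  · exact integrableOn_Qc (continuous_tangentialHessianSq hh.contDiff) r
  · exact sq_pdx_pdx_le_tangentialHessianSq hk j h p

end DirichletEnergyBound

/-- The supremum of `S h` over a cylinder is controlled by the data of the Dirichlet problem that
`h` solves on any larger one, with a constant that depends on the coefficients only through
`δ`. -/
def DirichletPointwiseBound (δ : ℝ) (e : Fin d) (S : (SpaceTime d → ℝ) → SpaceTime d → ℝ) :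
    Prop :=
  ∀ r R, 0 ≤ r → r < R → ∃ N, 0 ≤ N ∧ ∀ a, UniformlyElliptic δ a → ∀ u h,
    IsDirichletSolution R e a u h → ∀ p ∈ Qc d r, S h p ^ 2 ≤ N * dataNorm R e a u ^ 2

lemma PointwiseBound.comp_of_dirichletEnergyBound {S T : (SpaceTime d → ℝ) → SpaceTime d → ℝ}
    (hS : PointwiseBound δ e S) (hE : DirichletEnergyBound δ e fun v p => T v p ^ 2)
    (hT : ∀ a, UniformlyElliptic δ a → ∀ R v, IsSolution R e a v → IsSolution R e a (T v)) :
    DirichletPointwiseBound δ e fun v => S (T v) := by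
  intro r R hr hrR
  obtain ⟨ρ, hrρ, hρR⟩ := exists_between hrR
  have hρ : 0 ≤ ρ := hr.trans hrρ.le
  obtain ⟨N, hN, hpointwise⟩ := hS r ρ hr hrρ
  obtain ⟨M, hM, henergy⟩ := hE ρ R hρ hρR
  refine ⟨N * M, by positivity, fun a ha u h hh p hp => ?_⟩
  calc S (T h) p ^ 2
      ≤ N * ∫ q in Qc d ρ, T h q ^ 2 :=
        hpointwise a ha _ (hT a ha ρ h (hh.toIsSolution.mono hρ hρR.le)) p hp
    _ ≤ N * (M * dataNorm R e a u ^ 2) := by gcongr; exact henergy a ha u h hh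
    _ = N * M * dataNorm R e a u ^ 2 := by ring

namespace DirichletPointwiseBound

variable {S : (SpaceTime d → ℝ) → SpaceTime d → ℝ}

lemma comp_pdt (hδ : 0 < δ) (hS : PointwiseBound δ e S) :
    DirichletPointwiseBound δ e fun v => S (pdt v) :=
  hS.comp_of_dirichletEnergyBound (DirichletEnergyBound.pdt_sq hδ e) fun _ ha _ _ hv =>
    hv.dirDeriv ha (ξ := timeDir d) rfl

lemma pdx_pdx_pdx_of_ne (hδ : 0 < δ) (i : Fin d) {j k : Fin d} (hj : j ≠ e) (hk : k ≠ e) :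
    DirichletPointwiseBound δ e fun v => pdx i (pdx j (pdx k v)) :=
  (PointwiseBound.pdx hδ e i).comp_of_dirichletEnergyBound
    (DirichletEnergyBound.pdx_pdx_sq hδ e j hk) fun _ ha _ _ hv =>
      (hv.dirDeriv ha (ξ := spaceDir k) (by simp [hk.symm])).dirDeriv ha (ξ := spaceDir j)
        (by simp [hj.symm])

lemma exists_tangentialHessianSq_pdx_le (hδ : 0 < δ) {k : Fin d} (hk : k ≠ e) (hr : 0 ≤ r)
    (hrR : r < R) :
    ∃ N, 0 ≤ N ∧ ∀ a, UniformlyElliptic δ a → ∀ u h, IsDirichletSolution R e a u h →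
      ∀ p ∈ Qc d r, tangentialHessianSq e (pdx k h) p ≤ N * dataNorm R e a u ^ 2 := by
  have hbound (l : univ.erase e) (j : Fin d) :=
    pdx_pdx_pdx_of_ne hδ j (ne_of_mem_erase l.2) hk r R hr hrR
  choose N hN hbound using hbound
  refine ⟨∑ l : univ.erase e, ∑ j, N l j, sum_nonneg fun l _ => sum_nonneg fun j _ => hN l j,
    fun a ha u h hh p hp => ?_⟩
  rw [tangentialHessianSq, ← sum_coe_sort, sum_mul]
  refine sum_le_sum fun l _ => ?_
  rw [sum_mul]
  exact sum_le_sum fun j _ => hbound l j a ha u h hh p hp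

lemma pdx_self_pdx_self_pdx (hδ : 0 < δ) {k : Fin d} (hk : k ≠ e) :
    DirichletPointwiseBound δ e fun v => pdx e (pdx e (pdx k v)) := by
  intro r R hr hrR
  obtain ⟨N, hN, htime⟩ := comp_pdt hδ (PointwiseBound.pdx hδ e k) r R hr hrR
  obtain ⟨M, hM, hhess⟩ := exists_tangentialHessianSq_pdx_le hδ hk hr hrR
  have hconst := hessianConst_nonneg d δ
  refine ⟨3 * (δ⁻¹ ^ 2 + hessianConst d δ) * (N + M), by positivity, fun a ha u h hh p hp => ?_⟩
  have hsol : IsSolution R e a (pdx k h) :=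
    hh.toIsSolution.dirDeriv ha (ξ := spaceDir k) (by simp [hk.symm])
  have heq := ha.sq_pdx_pdx_self_le (e := e) hsol.contDiff p
  rw [hsol.eq_zero p (Qc_mono hr hrR.le hp), ← pdx_pdt_comm hh.contDiff] at heq
  calc pdx e (pdx e (pdx k h)) p ^ 2
      ≤ 3 * (δ⁻¹ ^ 2 + hessianConst d δ)
          * (0 ^ 2 + pdx k (pdt h) p ^ 2 + tangentialHessianSq e (pdx k h) p) := heq
    _ ≤ 3 * (δ⁻¹ ^ 2 + hessianConst d δ)
          * (0 ^ 2 + N * dataNorm R e a u ^ 2 + M * dataNorm R e a u ^ 2) := by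
        gcongr
        · exact htime a ha u h hh p hp
        · exact hhess a ha u h hh p hp
    _ = 3 * (δ⁻¹ ^ 2 + hessianConst d δ) * (N + M) * dataNorm R e a u ^ 2 := by ring

lemma pdx_pdx_pdx (hδ : 0 < δ) (i j : Fin d) {k : Fin d} (hk : k ≠ e) :
    DirichletPointwiseBound δ e fun v => pdx i (pdx j (pdx k v)) := by
  obtain rfl | hj := eq_or_ne j e
  · obtain rfl | hi := eq_or_ne i j
    · exact pdx_self_pdx_self_pdx hδ hk
    · intro r R hr hrR
      obtain ⟨N, hN, hbound⟩ := pdx_pdx_pdx_of_ne hδ j hi hk r R hr hrR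
      refine ⟨N, hN, fun a ha u h hh => ?_⟩
      simpa only [pdx_comm (contDiff_pdx k hh.contDiff) i j] using hbound a ha u h hh
  · exact pdx_pdx_pdx_of_ne hδ i hj hk

end DirichletPointwiseBound

end Dirichlet

/-! ### The estimate for functions smooth near the closed cylinder -/

section Extension

variable {d : ℕ} {δ r R : ℝ} {e : Fin d} {a : ℝ → Fin d → Fin d → ℝ}
  {f g u h : SpaceTime d → ℝ}

lemma mem_closure_ballE {x : Fin d → ℝ} (hR : 0 < R) (hx : ∑ j, x j ^ 2 ≤ R ^ 2) :
    x ∈ closure (ballE d R) := by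
  have hone : (1 : ℝ) ∈ closure (Set.Ioo (0 : ℝ) 1) := by
    rw [closure_Ioo zero_ne_one]
    exact Set.right_mem_Icc.2 zero_le_one
  have hmem : (1 : ℝ) • x ∈ closure ((fun s : ℝ => s • x) '' Set.Ioo 0 1) :=
    image_closure_subset_closure_image (by fun_prop) ⟨1, hone, rfl⟩
  rw [one_smul] at hmem
  refine closure_mono ?_ hmem
  rintro _ ⟨s, ⟨hs0, hs1⟩, rfl⟩
  calc ∑ j, (s • x) j ^ 2 = s ^ 2 * ∑ j, x j ^ 2 := by simp [mul_pow, mul_sum]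
    _ ≤ s ^ 2 * R ^ 2 := by gcongr
    _ < R ^ 2 := mul_lt_of_lt_one_left (by positivity) (pow_lt_one₀ hs0.le hs1 two_ne_zero)

lemma pbQc_subset_closure_Qc (hR : 0 < R) : pbQc d R ⊆ closure (Qc d R) := by
  rw [Qc, closure_prod_eq, closure_Ioo (by positivity)]
  rintro ⟨t, x⟩ (⟨ht, hx⟩ | ⟨rfl, hx⟩)
  · exact ⟨ht, mem_closure_ballE hR (le_of_eq hx)⟩
  · exact ⟨Set.right_mem_Icc.2 (sq_nonneg R), subset_closure hx⟩

lemma exists_contDiff_eqOn_of_contDiffOn {E : Type*} [NormedAddCommGroup E] [NormedSpace ℝ E]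
    [FiniteDimensional ℝ E] {f : E → ℝ} {K U : Set E} (hK : IsClosed K) (hU : IsOpen U)
    (hKU : K ⊆ U) (hf : ContDiffOn ℝ ∞ f U) : ∃ g, ContDiff ℝ ∞ g ∧ Set.EqOn g f K := by
  obtain ⟨χ, hχ0, hχ1, -⟩ := exists_contMDiffMap_zero_one_nhds_of_isClosed
    (modelWithCornersSelf ℝ E) (n := ⊤) hU.isClosed_compl hK
    (Set.disjoint_left.2 fun p hp hq => hp (hKU hq))
  refine ⟨fun p => χ p * f p, contDiff_iff_contDiffAt.2 fun p => ?_, fun p hp => ?_⟩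
  · by_cases hp : p ∈ U
    · exact χ.contMDiff.contDiff.contDiffAt.mul (hf.contDiffAt (hU.mem_nhds hp))
    · have hzero : (fun p => χ p * f p) =ᶠ[nhds p] fun _ => 0 := by
        filter_upwards [hχ0.filter_mono (nhds_le_nhdsSet hp)] with q hq
        rw [hq, zero_mul]
      exact contDiffAt_const.congr_of_eventuallyEq hzero
  · simp only [hχ1.self_of_nhdsSet p hp, one_mul]

lemma pdt_eqOn (hfg : Set.EqOn f g (Qc d R)) : Set.EqOn (pdt f) (pdt g) (Qc d R) :=
  dirDeriv_eqOn (isOpen_Qc R) hfg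

lemma pdx_eqOn (j : Fin d) (hfg : Set.EqOn f g (Qc d R)) :
    Set.EqOn (pdx j f) (pdx j g) (Qc d R) :=
  dirDeriv_eqOn (isOpen_Qc R) hfg

lemma parabolicOp_eqOn (e : Fin d) (a : ℝ → Fin d → Fin d → ℝ) (hfg : Set.EqOn f g (Qc d R)) :
    Set.EqOn (parabolicOp e a f) (parabolicOp e a g) (Qc d R) := fun p hp => by
  simp only [parabolicOp, pdxx, pdt_eqOn hfg hp, pdx_eqOn _ (pdx_eqOn _ hfg) hp]

lemma exists_isDirichletSolution_eqOn (hR : 0 < R) {U : Set (SpaceTime d)} (hU : IsOpen U)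
    (hQU : closure (Qc d R) ⊆ U) (hh : ContDiffOn ℝ ∞ h U) (hu : ContDiff ℝ ∞ u)
    (hsol : ∀ p ∈ Qc d R, parabolicOp e a h p = 0) (hbdry : ∀ p ∈ pbQc d R, h p = u p) :
    ∃ g, IsDirichletSolution R e a u g ∧ Set.EqOn g h (Qc d R) := by
  obtain ⟨g, hg, hgh⟩ := exists_contDiff_eqOn_of_contDiffOn isClosed_closure hU hQU hh
  have hgh_Qc : Set.EqOn g h (Qc d R) := hgh.mono subset_closure
  exact ⟨g, ⟨⟨hg, fun p hp => (parabolicOp_eqOn e a hgh_Qc hp).trans (hsol p hp)⟩, hu,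
    fun p hp => (hgh (pbQc_subset_closure_Qc hR hp)).trans (hbdry p hp)⟩, hgh_Qc⟩

/-- The supremum of `|f|` over `Q_r`. The value is only meaningful if `f` is bounded there, since
an unbounded real supremum is `0`. -/
noncomputable def supQc (r : ℝ) (f : SpaceTime d → ℝ) : ℝ := ⨆ p ∈ Qc d r, |f p|

lemma supQc_congr (hfg : Set.EqOn f g (Qc d r)) : supQc r f = supQc r g := by
  unfold supQc
  congr! 4 with p hp
  rw [hfg hp]

/-- The left-hand side of the main estimate: the suprema over `Q_r` of `h_{tt}`, `h_{t x^j}`,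
`h_{t x^j x^k}` and `h_{x^i x^j x^k}` with `k ≠ e`, added up. -/
noncomputable def derivativeSup (r : ℝ) (e : Fin d) (h : SpaceTime d → ℝ) : ℝ :=
  supQc r (pdt (pdt h)) + (∑ j, supQc r (pdx j (pdt h)))
    + (∑ j, ∑ k ∈ univ.erase e, supQc r (pdxx j k (pdt h)))
    + ∑ i, ∑ j, ∑ k ∈ univ.erase e, supQc r (pdx i (pdxx j k h))

lemma derivativeSup_congr (e : Fin d) (hfg : Set.EqOn f g (Qc d r)) :
    derivativeSup r e f = derivativeSup r e g := by
  have htime := pdt_eqOn hfg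
  simp only [derivativeSup, pdxx, supQc_congr (pdt_eqOn htime),
    fun j => supQc_congr (pdx_eqOn j htime),
    fun j k => supQc_congr (pdx_eqOn j (pdx_eqOn k htime)),
    fun i j k => supQc_congr (pdx_eqOn i (pdx_eqOn j (pdx_eqOn k hfg)))]

/-- The functional `F` of solutions of the Dirichlet problem in `Q_R` is controlled by the norm of
the data, with a constant that depends on the coefficients only through `δ`. -/
def DataBound (δ R : ℝ) (e : Fin d) (F : (SpaceTime d → ℝ) → ℝ) : Prop :=
  ∃ N, 0 ≤ N ∧ ∀ a, UniformlyElliptic δ a → ∀ u h, IsDirichletSolution R e a u h →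
    F h ≤ N * dataNorm R e a u

namespace DataBound

lemma add {F G : (SpaceTime d → ℝ) → ℝ} (hF : DataBound δ R e F) (hG : DataBound δ R e G) :
    DataBound δ R e fun h => F h + G h := by
  obtain ⟨N, hN, hNF⟩ := hF
  obtain ⟨M, hM, hMG⟩ := hG
  refine ⟨N + M, by positivity, fun a ha u h hh => ?_⟩
  rw [add_mul]
  exact add_le_add (hNF a ha u h hh) (hMG a ha u h hh)

lemma sum {ι : Type*} {s : Finset ι} {F : ι → (SpaceTime d → ℝ) → ℝ}
    (hF : ∀ i ∈ s, DataBound δ R e (F i)) : DataBound δ R e fun h => ∑ i ∈ s, F i h := by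
  classical
  induction s using Finset.induction_on with
  | empty => exact ⟨0, le_rfl, fun a _ u h _ => by simp⟩
  | insert i s hi ih =>
    simp only [sum_insert hi]
    exact (hF i (mem_insert_self i s)).add (ih fun j hj => hF j (mem_insert_of_mem hj))

lemma supQc {S : (SpaceTime d → ℝ) → SpaceTime d → ℝ} (hS : DirichletPointwiseBound δ e S)
    (hr : 0 ≤ r) (hrR : r < R) : DataBound δ R e fun h => supQc r (S h) := by
  obtain ⟨N, hN, hbound⟩ := hS r R hr hrR
  refine ⟨√N, Real.sqrt_nonneg N, fun a ha u h hh => ?_⟩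
  have hdata := dataNorm_nonneg R e a u
  have habs : ∀ p ∈ Qc d r, |S h p| ≤ √N * dataNorm R e a u := fun p hp =>
    (Real.abs_le_sqrt (hbound a ha u h hh p hp)).trans_eq <| by
      rw [Real.sqrt_mul hN, Real.sqrt_sq hdata]
  exact Real.iSup_le (fun p => Real.iSup_le (habs p) (by positivity)) (by positivity)

lemma derivativeSup (hδ : 0 < δ) (e : Fin d) (hr : 0 ≤ r) (hrR : r < R) :
    DataBound δ R e (derivativeSup r e) := by
  refine (((supQc ?_ hr hrR).add (sum fun j _ => supQc ?_ hr hrR)).add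
    (sum fun j _ => sum fun k hk => supQc ?_ hr hrR)).add
    (sum fun i _ => sum fun j _ => sum fun k hk => supQc ?_ hr hrR)
  · exact .comp_pdt hδ (.pdt hδ e)
  · exact .comp_pdt hδ (.pdx hδ e j)
  · exact .comp_pdt hδ (.pdx_pdx hδ e j (ne_of_mem_erase hk))
  · exact .pdx_pdx_pdx hδ i j (ne_of_mem_erase hk)

end DataBound

end Extension

theorem stmt11_general {d : ℕ} (e : Fin d) {δ r R : ℝ} (hδ : 0 < δ) (hr : 0 ≤ r) (hrR : r < R) :
    ∃ N : ℝ, 0 < N ∧ ∀ a, UniformlyElliptic δ a → ∀ u, ContDiff ℝ ∞ u →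
      ∀ (h : SpaceTime d → ℝ) (U : Set (SpaceTime d)), IsOpen U → closure (Qc d R) ⊆ U →
        ContDiffOn ℝ ∞ h U → (∀ p ∈ Qc d R, parabolicOp e a h p = 0) →
        (∀ p ∈ pbQc d R, h p = u p) → derivativeSup r e h ≤ N * dataNorm R e a u := by
  obtain ⟨N, hN, hbound⟩ := DataBound.derivativeSup hδ e hr hrR
  refine ⟨N + 1, by positivity, fun a ha u hu h U hU hQU hh hsol hbdry => ?_⟩
  obtain ⟨g, hg, hgh⟩ :=
    exists_isDirichletSolution_eqOn (hr.trans_lt hrR) hU hQU hh hu hsol hbdry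
  calc derivativeSup r e h
      = derivativeSup r e g := derivativeSup_congr e (hgh.symm.mono (Qc_mono hr hrR.le))
    _ ≤ N * dataNorm R e a u := hbound a ha u g hg
    _ ≤ (N + 1) * dataNorm R e a u := by
        gcongr
        · exact dataNorm_nonneg R e a u
        · exact le_add_of_nonneg_right zero_le_one

theorem stmt11 (d : ℕ) (hd : 2 ≤ d) (δ : ℝ) (hδ : δ ∈ Set.Ioo (0 : ℝ) 1) :
    ∃ N : ℝ, 0 < N ∧
      ∀ a : ℝ → Fin d → Fin d → ℝ,
        (∀ j k, ContDiff ℝ (⊤ : ℕ∞) fun s => a s j k) →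
        (∀ s j k, a s j k = a s k j) →
        (∀ (s : ℝ) (θ : Fin d → ℝ),
          δ * ∑ j, (θ j) ^ 2 ≤ ∑ j, ∑ k, a s j k * θ j * θ k ∧
          ∑ j, ∑ k, a s j k * θ j * θ k ≤ δ⁻¹ * ∑ j, (θ j) ^ 2) →
        ∀ u : ℝ × (Fin d → ℝ) → ℝ, ContDiff ℝ (⊤ : ℕ∞) u → HasCompactSupport u →
          ∀ (h : ℝ × (Fin d → ℝ) → ℝ) (U : Set (ℝ × (Fin d → ℝ))),
            IsOpen U → closure (Qc d 4) ⊆ U → ContDiffOn ℝ (⊤ : ℕ∞) h U →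
            (∀ p ∈ Qc d 4,
              pdt h p + ∑ j, ∑ k, a (p.2 ⟨0, by omega⟩) j k * pdxx j k h p = 0) →
            (∀ p ∈ pbQc d 4, h p = u p) →
            (⨆ p ∈ Qc d 1, |pdt (pdt h) p|)
                + (∑ j, ⨆ p ∈ Qc d 1, |pdx j (pdt h) p|)
                + (∑ j, ∑ k ∈ Finset.univ.filter (fun k : Fin d => k.val ≠ 0),
                    ⨆ p ∈ Qc d 1, |pdxx j k (pdt h) p|)
                + (∑ i, ∑ j, ∑ k ∈ Finset.univ.filter (fun k : Fin d => k.val ≠ 0),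
                    ⨆ p ∈ Qc d 1, |pdx i (pdxx j k h) p|)
              ≤ N * (Real.sqrt (∫ p in Qc d 4,
                      (pdt u p + ∑ j, ∑ k, a (p.2 ⟨0, by omega⟩) j k * pdxx j k u p) ^ 2)
                    + Real.sqrt (∫ p in Qc d 4, ∑ j, ∑ k, (pdxx j k u p) ^ 2)) := by
  obtain ⟨N, hN, hbound⟩ :=
    stmt11_general (⟨0, by omega⟩ : Fin d) hδ.1 zero_le_one (by norm_num : (1 : ℝ) < 4)
  have htangential : univ.filter (fun k : Fin d => k.val ≠ 0) = univ.erase ⟨0, by omega⟩ := by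
    ext k
    simp [Fin.ext_iff]
  refine ⟨N, hN, fun a hsmooth hsymm hell u hu _ h U hU hQU hh hsol hbdry => ?_⟩
  rw [htangential]
  exact hbound a ⟨hδ.1, hsmooth, hsymm, fun s θ => (hell s θ).1, fun s θ => (hell s θ).2⟩ u hu h U
    hU hQU hh hsol hbdry
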